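/- Let s be a positive integer, q = 3^{2s}, let h₀ be a positive divisor of 3^{s} + 1, and set h = h₀². Then for all integers t, m with 1 ≤ t < m ≤ 2⌈(q + 2·3^{s} + 1 − 8h)/(6h)⌉, there exists an optimal (3h−2, 3)-LRC over F_q with parameters [3hm, (3h−2)t + 1, 3h(m−t)]_q, and there exists an optimal (2, 3h−1)-LRC over F_q with parameters [3hm, 2t + 1, 3h(m−t)]_q. -/

import Mathlib

/-- The Hamming weight of a vector: the number of nonzero coordinates. -/
def hammingWt {F : Type*} [Zero F] [DecidableEq F] {n : ℕ} (v : Fin n → F) : ℕ :=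
  (Finset.univ.filter (fun i => v i ≠ 0)).card

/-- The minimum distance of the linear code `C` is at least `d`. -/
def MinDistGe {F : Type*} [Field F] [DecidableEq F] {n : ℕ}
    (C : Submodule F (Fin n → F)) (d : ℕ) : Prop :=
  ∀ c ∈ C, c ≠ 0 → d ≤ hammingWt c

/-- The minimum distance of the linear code `C` is exactly `d`. -/
def MinDistEq {F : Type*} [Field F] [DecidableEq F] {n : ℕ}
    (C : Submodule F (Fin n → F)) (d : ℕ) : Prop :=
  MinDistGe C d ∧ ∃ c ∈ C, c ≠ 0 ∧ hammingWt c = d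

/-- `C` is an `(r, δ)`-locally repairable code: every coordinate `i` has a repair
group `R` containing `i`, of size at most `r + δ - 1`, such that the punctured code
`C|_R` has minimum distance at least `δ` (i.e. every codeword whose restriction to
`R` is nonzero has at least `δ` nonzero coordinates inside `R`). -/
def IsLRC {F : Type*} [Field F] [DecidableEq F] {n : ℕ}
    (C : Submodule F (Fin n → F)) (r δ : ℕ) : Prop :=
  ∀ i : Fin n, ∃ R : Finset (Fin n), i ∈ R ∧ R.card ≤ r + δ - 1 ∧
    ∀ c ∈ C, (∃ j ∈ R, c j ≠ 0) → δ ≤ (R.filter (fun j => c j ≠ 0)).card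

/-- The parameters `[n, k, d]` attain the Singleton-type bound for `(r, δ)`-LRCs:
`d = n - k + 1 - (⌈k/r⌉ - 1)(δ - 1)`  (here `⌈k/r⌉ = (k + r - 1)/r`). -/
def SingletonOptimal (n k d r δ : ℕ) : Prop :=
  (d : ℤ) = (n : ℤ) - (k : ℤ) + 1 - ((((k + r - 1) / r : ℕ) : ℤ) - 1) * ((δ : ℤ) - 1)

/-- There exists an optimal `(r, δ)`-LRC over `F` with parameters `[n, k, d]`. -/
def ExistsOptimalLRC (F : Type*) [Field F] [DecidableEq F] (n k d r δ : ℕ) : Prop :=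
  ∃ C : Submodule F (Fin n → F),
    Module.finrank F C = k ∧ MinDistEq C d ∧ IsLRC C r δ ∧ SingletonOptimal n k d r δ



namespace LRC

/-- stable -/
def Stab {A : Type*} [AddCommGroup A] (σ : A →+ A) (H : AddSubgroup A) : Prop := ∀ a ∈ H, σ a ∈ H

lemma L2 {A : Type*} [AddCommGroup A] [Finite A] (σ : A →+ A) (hσ : ∀ a, a + σ a + σ (σ a) = 0)
    (l : ℕ) (hl : l.Prime) (hd : l ∣ Nat.card A) (c : ℤ) (hc : (l : ℤ) ∣ c ^ 2 + c + 1) :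
    ∃ H : AddSubgroup A, Stab σ H ∧ Nat.card H = l := by
  have := Fact.mk hl
  obtain ⟨w, hw⟩ := exists_prime_addOrderOf_dvd_card' l hd
  have hlw : (l : ℤ) • w = 0 := by
    rw [natCast_zsmul, ← hw]; exact addOrderOf_nsmul_eq_zero w
  by_cases hu : σ w = c • w
  · refine ⟨AddSubgroup.zmultiples w, ?_, by rw [Nat.card_zmultiples, hw]⟩
    rintro _ ⟨k, rfl⟩
    refine ⟨k * c, ?_⟩
    simp [hu, mul_smul]
  · set u := σ w - c • w with hu'
    have hu0 : u ≠ 0 := sub_ne_zero.mpr hu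
    have hlu : l • u = 0 := by
      rw [hu', smul_sub, ← map_nsmul, smul_comm, ← natCast_zsmul w, hlw]; simp
    have hs : σ u = (-1 - c) • u := by
      obtain ⟨k, hk⟩ := hc
      have h0 : (c ^ 2 + c + 1) • w = 0 := by
        rw [hk, mul_comm, mul_smul, hlw, smul_zero]
      have h1 := hσ w
      have h2 : σ (σ w) = - w - σ w := by
        rw [← sub_eq_zero, ← h1]; abel
      rw [hu', map_sub, map_zsmul, h2, ← sub_eq_zero, ← neg_eq_zero, ← h0]
      simp only [smul_sub, sub_smul, add_smul, neg_smul, one_smul, smul_smul, pow_two, sub_mul, neg_mul, one_mul]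
      abel
    refine ⟨AddSubgroup.zmultiples u, ?_, ?_⟩
    · rintro _ ⟨k, rfl⟩
      refine ⟨k * (-1 - c), ?_⟩
      simp only [map_zsmul, hs, mul_smul]
    · rw [Nat.card_zmultiples]
      exact addOrderOf_eq_prime hlu hu0

lemma L3 {A : Type*} [AddCommGroup A] [Finite A] (σ : A →+ A) (hσ : ∀ a, a + σ a + σ (σ a) = 0)
    (l : ℕ) (hl : l.Prime) (H : AddSubgroup A) (hH : Stab σ H) (hc : Nat.card H = l) :
    ∃ c : ℤ, (l : ℤ) ∣ c ^ 2 + c + 1 := by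
  have := Fact.mk hl
  obtain ⟨w, hw⟩ := exists_prime_addOrderOf_dvd_card' (G := H) l (by rw [hc])
  have hw' : addOrderOf (w : A) = l := by rw [← hw]; exact AddSubgroup.addOrderOf_coe w
  have hz : AddSubgroup.zmultiples (w : A) = H := by
    apply AddSubgroup.eq_of_le_of_card_ge
    · rw [AddSubgroup.zmultiples_le]; exact w.2
    · rw [Nat.card_zmultiples, hw', hc]
  have hs : σ (w : A) ∈ AddSubgroup.zmultiples (w : A) := hz.symm ▸ hH w w.2
  obtain ⟨c, hc⟩ := hs
  refine ⟨c, ?_⟩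
  simp only at hc
  have h1 := hσ w
  rw [← hc, map_zsmul, ← hc, smul_smul] at h1
  rw [← hw', addOrderOf_dvd_iff_zsmul_eq_zero, ← h1, add_smul, add_smul, one_smul, pow_two]
  abel

lemma L1 {A : Type*} [AddCommGroup A] [Finite A] (σ : A →+ A) (hσ : ∀ a, a + σ a + σ (σ a) = 0)
    (l : ℕ) (hl : l.Prime) (hd : l ∣ Nat.card A) :
    ∃ H : AddSubgroup A, Stab σ H ∧ (Nat.card H = l ∨ Nat.card H = l ^ 2) := by
  have := Fact.mk hl
  obtain ⟨v, hv⟩ := exists_prime_addOrderOf_dvd_card' l hd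
  have hlw : (l : ℤ) • v = 0 := by
    rw [natCast_zsmul, ← hv]; exact addOrderOf_nsmul_eq_zero v
  by_cases hu : σ v ∈ AddSubgroup.zmultiples v
  · refine ⟨AddSubgroup.zmultiples v, ?_, Or.inl (by rw [Nat.card_zmultiples, hv])⟩
    obtain ⟨c, hc⟩ := hu
    simp only at hc
    rintro _ ⟨k, rfl⟩
    refine ⟨k * c, ?_⟩
    simp [← hc, mul_smul]
  · have hlu : (l : ℤ) • σ v = 0 := by rw [← map_zsmul, hlw, map_zero]
    let f1 : ZMod l →+ A := ZMod.lift l ⟨zmultiplesHom A v, by simpa using hlw⟩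
    let f2 : ZMod l →+ A := ZMod.lift l ⟨zmultiplesHom A (σ v), by simpa using hlu⟩
    let f : ZMod l × ZMod l →+ A := f1.coprod f2
    have hf : ∀ i j : ℤ, f ((i : ZMod l), (j : ZMod l)) = i • v + j • σ v := by
      intro i j
      simp only [f, f1, f2, AddMonoidHom.coprod_apply, ZMod.lift_coe]
      simp
    have hinj : Function.Injective f := by
      rw [injective_iff_map_eq_zero]
      rintro ⟨i, j⟩ hij
      obtain ⟨i, rfl⟩ := ZMod.intCast_surjective i
      obtain ⟨j, rfl⟩ := ZMod.intCast_surjective j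
      rw [hf] at hij
      have hj : (l : ℤ) ∣ j := by
        by_contra hj
        have hcop : IsCoprime (l : ℤ) j := (Nat.prime_iff_prime_int.mp hl).irreducible.coprime_iff_not_dvd.mpr hj
        obtain ⟨a, b, hab⟩ := hcop
        apply hu
        refine ⟨-(b * i), ?_⟩
        have h3 : j • σ v = - (i • v) := by rw [← sub_eq_zero, ← hij]; abel
        have : σ v = (a * l + b * j) • σ v := by rw [hab, one_smul]
        rw [this, add_smul, mul_smul, mul_smul, hlu, h3]
        simp [mul_smul]
      have hj0 : j • σ v = 0 := by
        obtain ⟨k, rfl⟩ := hj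
        rw [mul_comm, mul_smul, hlu, smul_zero]
      rw [hj0, add_zero] at hij
      have hi : (l : ℤ) ∣ i := by rw [← hv]; exact addOrderOf_dvd_iff_zsmul_eq_zero.mpr hij
      rw [Prod.mk_eq_zero, ZMod.intCast_zmod_eq_zero_iff_dvd, ZMod.intCast_zmod_eq_zero_iff_dvd]
      exact ⟨hi, hj⟩
    refine ⟨f.range, ?_, Or.inr ?_⟩
    · rintro _ ⟨⟨i, j⟩, rfl⟩
      obtain ⟨i, rfl⟩ := ZMod.intCast_surjective i
      obtain ⟨j, rfl⟩ := ZMod.intCast_surjective j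
      refine ⟨(((-j : ℤ) : ZMod l), ((i - j : ℤ) : ZMod l)), ?_⟩
      have h2 : σ (σ v) = - v - σ v := by
        rw [← sub_eq_zero, ← hσ v]; abel
      rw [hf, hf, map_add, map_zsmul, map_zsmul, h2]
      simp only [smul_sub, sub_smul, neg_smul, smul_neg]
      abel
    · have := Nat.card_congr (AddMonoidHom.ofInjective hinj).toEquiv
      rw [← this, Nat.card_prod, Nat.card_zmod, pow_two]

/-- induced map -/
noncomputable def qmap {A : Type*} [AddCommGroup A] (σ : A →+ A) (H : AddSubgroup A) (hH : Stab σ H) :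
    A ⧸ H →+ A ⧸ H := QuotientAddGroup.map H H σ (fun a ha => hH a ha)

lemma qmap_rel {A : Type*} [AddCommGroup A] (σ : A →+ A) (hσ : ∀ a, a + σ a + σ (σ a) = 0)
    (H : AddSubgroup A) (hH : Stab σ H) (a : A ⧸ H) :
    a + qmap σ H hH a + qmap σ H hH (qmap σ H hH a) = 0 := by
  obtain ⟨a, rfl⟩ := QuotientAddGroup.mk_surjective a
  have : (QuotientAddGroup.mk (a + σ a + σ (σ a)) : A ⧸ H) = 0 := by rw [hσ]; rfl
  exact this

lemma lift_sub {A : Type*} [AddCommGroup A] [Finite A] (σ : A →+ A)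
    (H : AddSubgroup A) (hH : Stab σ H) (K : AddSubgroup (A ⧸ H)) (hK : Stab (qmap σ H hH) K) :
    ∃ L : AddSubgroup A, Stab σ L ∧ Nat.card L = Nat.card H * Nat.card K := by
  refine ⟨K.comap (QuotientAddGroup.mk' H), ?_, ?_⟩
  · intro a ha
    exact hK _ ha
  · have h1 := AddSubgroup.index_comap_of_surjective K (QuotientAddGroup.mk'_surjective H)
    have h2 := (K.comap (QuotientAddGroup.mk' H)).card_mul_index
    have h3 := K.card_mul_index
    have h4 := AddSubgroup.card_eq_card_quotient_mul_card_addSubgroup H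
    have h5 : K.index ≠ 0 := AddSubgroup.index_ne_zero_of_finite
    rw [h1] at h2
    apply Nat.eq_of_mul_eq_mul_right (Nat.pos_of_ne_zero h5)
    rw [h2, h4, ← h3]; ring

lemma exists_sq {A : Type*} [AddCommGroup A] [Finite A] (σ : A →+ A)
    (hσ : ∀ a, a + σ a + σ (σ a) = 0) (n : ℕ) (hn : Nat.card A = n ^ 2) (l : ℕ) (hl : l.Prime)
    (hd : l ∣ n) : ∃ H : AddSubgroup A, Stab σ H ∧ Nat.card H = l ^ 2 := by
  obtain ⟨k, rfl⟩ := hd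
  obtain ⟨H, hH, h | h⟩ := L1 σ hσ l hl (by rw [hn, mul_pow, pow_two, mul_assoc]; exact dvd_mul_right _ _)
  · obtain ⟨c, hc⟩ := L3 σ hσ l hl H hH h
    have hq := AddSubgroup.card_eq_card_quotient_mul_card_addSubgroup H
    rw [hn, h] at hq
    have hq' : Nat.card (A ⧸ H) = l * k ^ 2 := by
      apply Nat.eq_of_mul_eq_mul_right hl.pos
      rw [← hq]; ring
    obtain ⟨K, hK, hKc⟩ := L2 (qmap σ H hH) (qmap_rel σ hσ H hH) l hl (by rw [hq']; exact dvd_mul_right _ _) c hc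
    obtain ⟨L, hL, hLc⟩ := lift_sub σ H hH K hK
    exact ⟨L, hL, by rw [hLc, h, hKc, pow_two]⟩
  · exact ⟨H, hH, h⟩

lemma exists_stab (h₀ : ℕ) : ∀ {A : Type*} [AddCommGroup A] [Finite A] (σ : A →+ A)
    (_ : ∀ a, a + σ a + σ (σ a) = 0) (n : ℕ) (_ : Nat.card A = n ^ 2) (_ : h₀ ∣ n),
    ∃ H : AddSubgroup A, Stab σ H ∧ Nat.card H = h₀ ^ 2 := by
  induction h₀ using Nat.strong_induction_on with
  | _ h₀ ih =>
  intro A _ _ σ hσ n hn hd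
  have hn0 : n ≠ 0 := by
    rintro rfl
    have := Nat.card_pos (α := A)
    simp [hn] at this
  have h0 : h₀ ≠ 0 := by
    rintro rfl
    exact hn0 (by simpa using hd)
  by_cases h1 : h₀ = 1
  · refine ⟨⊥, ?_, by simp [h1]⟩
    intro a ha
    simp_all
  · have hl := Nat.minFac_prime h1
    obtain ⟨e, he⟩ := Nat.minFac_dvd h₀
    set l := h₀.minFac
    obtain ⟨k, rfl⟩ := hd
    obtain ⟨H, hH, h⟩ := exists_sq σ hσ _ hn l hl (by rw [he, mul_assoc]; exact dvd_mul_right _ _)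
    have hq := AddSubgroup.card_eq_card_quotient_mul_card_addSubgroup H
    rw [hn, h, he] at hq
    have hq' : Nat.card (A ⧸ H) = (e * k) ^ 2 := by
      apply Nat.eq_of_mul_eq_mul_right (pow_pos hl.pos 2)
      rw [← hq]; ring
    have he0 : 0 < e := Nat.pos_of_ne_zero (by rintro rfl; simp_all)
    obtain ⟨K, hK, hKc⟩ := ih e (by rw [he]; nlinarith [hl.two_le]) (qmap σ H hH) (qmap_rel σ hσ H hH) (e * k) hq' (dvd_mul_right _ _)
    obtain ⟨L, hL, hLc⟩ := lift_sub σ H hH K hK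
    exact ⟨L, hL, by rw [hLc, h, hKc, he, mul_pow]⟩

end LRC


namespace LRC

/-- Artin–Schreier map -/
noncomputable def asm (F : Type*) [Field F] [CharP F 3] : F →+ F where
  toFun x := x ^ 3 - x
  map_zero' := by simp
  map_add' x y := by
    have h3 : (3 : F) = 0 := by exact_mod_cast CharP.cast_eq_zero F 3
    linear_combination (x ^ 2 * y + x * y ^ 2) * h3

lemma asm_apply (F : Type*) [Field F] [CharP F 3] (x : F) : asm F x = x ^ 3 - x := rfl

lemma card_ker_asm (F : Type*) [Field F] [CharP F 3] : Nat.card (asm F).ker = 3 := by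
  classical
  have h3 : (3 : F) = 0 := by exact_mod_cast CharP.cast_eq_zero F 3
  have h2 : (2 : F) ≠ 0 := by
    intro h; have : (1 : F) = 3 - 2 := by norm_num
    rw [h, h3] at this; simp at this
  have : ((asm F).ker : Set F) = (({0, 1, -1} : Finset F) : Set F) := by
    ext x
    simp only [SetLike.mem_coe, AddMonoidHom.mem_ker, asm_apply, Finset.coe_insert, Finset.coe_singleton,
      Set.mem_insert_iff, Set.mem_singleton_iff]
    constructor
    · intro h
      have : x * ((x - 1) * (x + 1)) = 0 := by rw [← h]; ring
      rcases mul_eq_zero.mp this with h | h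
      · exact Or.inl h
      · rcases mul_eq_zero.mp h with h | h
        · exact Or.inr (Or.inl (sub_eq_zero.mp h))
        · exact Or.inr (Or.inr (eq_neg_of_add_eq_zero_left h))
    · rintro (rfl | rfl | rfl) <;> ring
  have hc : Nat.card (asm F).ker = Nat.card (({0, 1, -1} : Finset F) : Set F) := by
    rw [← this]; rfl
  rw [hc, Nat.card_coe_set_eq, Set.ncard_coe_finset, Finset.card_eq_three]
  refine ⟨0, 1, -1, by simp, by simp, ?_, rfl⟩
  intro h
  apply h2
  have : (2 : F) = 1 + 1 := by norm_num
  rw [this]; nth_rewrite 1 [h]; ring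

lemma exists_char (F : Type*) [Field F] [Fintype F] [DecidableEq F] [CharP F 3] :
    ∃ ψ : AddChar F ℂ, ψ ≠ 1 ∧ ∀ c : F,
      ((Finset.univ.filter (fun x : F => x ^ 3 - x = c)).card : ℂ) = 1 + ψ c + ψ (-c) := by
  have hk := card_ker_asm F
  set R := (asm F).range with hR
  have hi : Nat.card (F ⧸ R) = 3 := by
    have h1 := AddSubgroup.card_eq_card_quotient_mul_card_addSubgroup R
    have h2 := AddSubgroup.card_eq_card_quotient_mul_card_addSubgroup (asm F).ker
    have h3 : Nat.card (F ⧸ (asm F).ker) = Nat.card R :=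
      Nat.card_congr (QuotientAddGroup.quotientKerEquivRange (asm F)).toEquiv
    rw [h3, hk, h1, mul_comm] at h2
    exact Nat.eq_of_mul_eq_mul_left (Nat.card_pos (α := R)) h2
  have hp : Fact (Nat.Prime 3) := ⟨Nat.prime_three⟩
  have hnt : Nontrivial (F ⧸ R) := by
    apply Finite.one_lt_card_iff_nontrivial.mp; omega
  obtain ⟨a, ha⟩ := exists_ne (0 : F ⧸ R)
  obtain ⟨ψ', hψ'⟩ := AddChar.exists_apply_ne_zero.mpr ha
  have key : ∀ b : F ⧸ R, b ≠ 0 → ψ' b ≠ 1 := by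
    intro b hb h
    have hz : a ∈ AddSubgroup.zmultiples b := mem_zmultiples_of_prime_card hi hb
    obtain ⟨k, hk⟩ := hz
    apply hψ'
    rw [← hk]
    simp only
    rw [AddChar.map_zsmul_eq_zpow, h, one_zpow]
  refine ⟨ψ'.compAddMonoidHom (QuotientAddGroup.mk' R), ?_, ?_⟩
  · intro h
    obtain ⟨x, rfl⟩ := QuotientAddGroup.mk_surjective a
    apply hψ'
    exact DFunLike.congr_fun h x
  · intro c
    simp only [AddChar.compAddMonoidHom_apply, map_neg]
    set b := QuotientAddGroup.mk' R c with hb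
    by_cases hc : c ∈ R
    · have hb0 : b = 0 := (QuotientAddGroup.eq_zero_iff c).mpr hc
      obtain ⟨x0, hx0⟩ := hc
      have h1 : (Finset.univ.filter (fun x : F => x ^ 3 - x = c)).card = 3 := by
        refine Eq.trans ?_ hk
        rw [← Fintype.card_subtype, ← Nat.card_eq_fintype_card]
        refine Nat.card_congr
          { toFun := fun x => ⟨x.1 - x0, ?_⟩, invFun := fun x => ⟨x.1 + x0, ?_⟩,
            left_inv := fun x => by simp, right_inv := fun x => by simp }
        · rw [AddMonoidHom.mem_ker, map_sub, hx0, asm_apply, x.2, sub_self]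
        · rw [← asm_apply, map_add, hx0, AddMonoidHom.mem_ker.mp x.2, zero_add]
      rw [hb0, h1]; norm_num
    · have hb0 : b ≠ 0 := fun h => hc ((QuotientAddGroup.eq_zero_iff c).mp h)
      have h1 : (Finset.univ.filter (fun x : F => x ^ 3 - x = c)) = ∅ := by
        rw [Finset.filter_eq_empty_iff]
        intro x _ hx
        exact hc ⟨x, hx⟩
      have hw := key b hb0
      have hw3 : ψ' b ^ 3 = 1 := by
        rw [← AddChar.map_nsmul_eq_pow, ← hi]
        simp
      rw [h1, AddChar.map_neg_eq_inv]
      have hw0 : ψ' b ≠ 0 := by intro h; rw [h] at hw3; norm_num at hw3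
      set w := ψ' b
      have : (w - 1) * (w ^ 2 + w + 1) = 0 := by linear_combination hw3
      have h4 := (mul_eq_zero.mp this).resolve_left (sub_ne_zero.mpr hw)
      field_simp
      simp only [Finset.card_empty, Nat.cast_zero]
      linear_combination -h4

lemma sum_sq (F : Type*) [Field F] [Fintype F] [DecidableEq F] (hF : ringChar F ≠ 2)
    (ψ : AddChar F ℂ) (hψ : ψ ≠ 1) (a : F) (ha : a ≠ 0) :
    ∑ y : F, ψ (a * y ^ 2) = (quadraticChar F a : ℂ) *
      gaussSum ((quadraticChar F).ringHomComp (Int.castRingHom ℂ)) ψ := by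
  set χ := (quadraticChar F).ringHomComp (Int.castRingHom ℂ) with hχ
  have h1 : ∑ y : F, ψ (a * y ^ 2) = ∑ c : F, ((Finset.univ.filter (fun y : F => y ^ 2 = c)).card : ℂ) * ψ (a * c) := by
    rw [← Finset.sum_fiberwise (s := Finset.univ) (g := fun y : F => y ^ 2)]
    apply Finset.sum_congr rfl
    intro c _
    rw [Finset.sum_congr rfl (g := fun _ => ψ (a * c))]
    · simp
    · intro y hy
      rw [(Finset.mem_filter.mp hy).2]
  have h2 : ∀ c : F, ((Finset.univ.filter (fun y : F => y ^ 2 = c)).card : ℂ) = χ c + 1 := by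
    intro c
    have := quadraticChar_card_sqrts hF c
    have h3 : (Finset.univ.filter (fun y : F => y ^ 2 = c)) = {x : F | x ^ 2 = c}.toFinset := by
      ext; simp
    rw [h3]
    have h4 : ((({x : F | x ^ 2 = c}.toFinset.card : ℤ)) : ℂ) = ((quadraticChar F c + 1 : ℤ) : ℂ) := by
      rw [this]
    rw [Int.cast_natCast] at h4
    rw [h4, Int.cast_add, Int.cast_one]
    rfl
  rw [h1]
  simp_rw [h2, add_mul, one_mul]
  rw [Finset.sum_add_distrib]
  have h5 : ∑ x : F, ψ (a * x) = 0 := by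
    have := AddChar.sum_eq_zero_of_ne_one hψ
    rw [← this]
    exact Fintype.sum_equiv (Equiv.mulLeft₀ a ha) _ _ (fun x => rfl)
  rw [h5, add_zero]
  have h6 := gaussSum_mulShift χ ψ (Units.mk0 a ha)
  have h7 : ∑ x : F, χ x * ψ (a * x) = gaussSum χ (ψ.mulShift (Units.mk0 a ha : Fˣ)) := by
    simp [gaussSum, AddChar.mulShift_apply]
  rw [h7, ← h6, ← mul_assoc]
  have h8 : (quadraticChar F a : ℂ) * χ (Units.mk0 a ha : Fˣ) = 1 := by
    have := quadraticChar_sq_one ha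
    simp only [hχ, MulChar.ringHomComp_apply, Units.val_mk0, eq_intCast]
    rw [← Int.cast_mul, ← pow_two, this]; simp
  rw [h8, one_mul]

lemma exists_curve (F : Type*) [Field F] [Fintype F] [DecidableEq F] [CharP F 3] (s : ℕ)
    (hF : Fintype.card F = 3 ^ (2 * s)) : ∃ g : F, g ≠ 0 ∧
      Nat.card {p : F × F // p.2 ^ 2 = p.1 ^ 3 - g ^ 2 * p.1} = 3 ^ (2 * s) + 2 * 3 ^ s := by
  have hr : ringChar F ≠ 2 := by
    rw [ringChar.eq F 3]; norm_num
  obtain ⟨ψ, hψ, hT⟩ := exists_char F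
  set χ := (quadraticChar F).ringHomComp (Int.castRingHom ℂ) with hχ
  set G := gaussSum χ ψ with hG
  have hsq : IsSquare (-1 : F) := by
    rw [FiniteField.isSquare_neg_one_iff, hF, pow_mul, Nat.pow_mod]
    norm_num
  have hm1 : quadraticChar F (-1) = 1 := (quadraticChar_one_iff_isSquare (by simp)).mpr hsq
  have hG2 : G ^ 2 = (3 ^ s : ℂ) ^ 2 := by
    have h1 : χ ≠ 1 := by
      intro h
      obtain ⟨a, ha⟩ := quadraticChar_exists_neg_one' hr
      have := DFunLike.congr_fun h (a : F)
      simp only [hχ, MulChar.ringHomComp_apply, ha, MulChar.one_apply_coe] at this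
      norm_num at this
    have := gaussSum_sq h1 ((quadraticChar_isQuadratic F).comp _) (AddChar.IsPrimitive.of_ne_one hψ)
    rw [hG, this, hF, hχ, MulChar.ringHomComp_apply, hm1]
    simp only [map_one]
    push_cast
    ring
  obtain ⟨ε, hε, hGε⟩ : ∃ g : F, g ≠ 0 ∧ (quadraticChar F g : ℂ) * G = 3 ^ s := by
    rcases sq_eq_sq_iff_eq_or_eq_neg.mp hG2 with h | h
    · exact ⟨1, one_ne_zero, by simp [h]⟩
    · obtain ⟨a, ha⟩ := quadraticChar_exists_neg_one hr
      refine ⟨a, ?_, by rw [ha, h]; simp⟩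
      rintro rfl; simp at ha
  refine ⟨ε, hε, ?_⟩
  have e : {p : F × F // p.2 ^ 2 = p.1 ^ 3 - ε ^ 2 * p.1} ≃
      (Σ y : F, {x : F // x ^ 3 - x = (ε ^ 3)⁻¹ * y ^ 2}) :=
    { toFun := fun p => ⟨p.1.2, ⟨p.1.1 / ε, by rw [p.2]; field_simp⟩⟩
      invFun := fun p => ⟨(ε * p.2.1, p.1), by
        have := p.2.2
        simp only
        field_simp at this
        linear_combination -this⟩
      left_inv := by rintro ⟨⟨x, y⟩, h⟩; simp; field_simp
      right_inv := by
        rintro ⟨y, ⟨x, h⟩⟩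
        simp [hε] }
  rw [Nat.card_congr e, Nat.card_sigma]
  have : ((∑ y : F, Nat.card {x : F // x ^ 3 - x = (ε ^ 3)⁻¹ * y ^ 2} : ℕ) : ℂ) =
      3 ^ (2 * s) + 2 * 3 ^ s := by
    push_cast
    have : ∀ y : F, (Nat.card {x : F // x ^ 3 - x = (ε ^ 3)⁻¹ * y ^ 2} : ℂ) =
        1 + ψ ((ε ^ 3)⁻¹ * y ^ 2) + ψ ((-(ε ^ 3)⁻¹) * y ^ 2) := by
      intro y
      rw [Nat.card_eq_fintype_card, Fintype.card_subtype, hT, neg_mul]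
    simp_rw [this, Finset.sum_add_distrib]
    rw [sum_sq F hr ψ hψ _ (by positivity), sum_sq F hr ψ hψ _ (by simpa using hε)]
    have h1 : quadraticChar F (-(ε ^ 3)⁻¹) = quadraticChar F (ε ^ 3)⁻¹ := by
      rw [neg_eq_neg_one_mul, map_mul, hm1, one_mul]
    have h2 : quadraticChar F (ε ^ 3)⁻¹ = quadraticChar F ε := by
      have : (ε ^ 3)⁻¹ = ε * ((ε⁻¹) ^ 2) ^ 2 := by field_simp
      rw [this, map_mul, quadraticChar_sq_one' (by simpa using hε), mul_one]
    rw [h1, h2, ← hG, hGε]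
    simp [hF]
    ring
  exact_mod_cast this

end LRC


namespace LRC

set_option linter.unusedSectionVars false

open WeierstrassCurve WeierstrassCurve.Affine

/-- The curve `y² = x³ - g² x`. -/
def Wg {F : Type*} [Field F] (g : F) : WeierstrassCurve.Affine F :=
  { a₁ := 0, a₂ := 0, a₃ := 0, a₄ := -g ^ 2, a₆ := 0 }

section
variable {F : Type*} [Field F] [DecidableEq F] {g : F}

/-- x coordinate -/
def xc : (Wg g).Point → F
  | .zero => 0
  | .some x _ _ => x

/-- y coordinate -/
def yc : (Wg g).Point → F
  | .zero => 0
  | .some _ y _ => y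

lemma Wg_eq (x y : F) : (Wg g).Equation x y ↔ y ^ 2 = x ^ 3 - g ^ 2 * x := by
  rw [equation_iff]
  simp [Wg, sub_eq_add_neg]

lemma Wg_negY (x y : F) : (Wg g).negY x y = - y := by simp [negY, Wg]

lemma three0 [CharP F 3] : (3 : F) = 0 := by exact_mod_cast CharP.cast_eq_zero F 3

lemma two0 [CharP F 3] : (2 : F) ≠ 0 := by
  intro h
  have : (1 : F) = 3 - 2 := by norm_num
  rw [h, three0] at this; simp at this

lemma Wg_ns [CharP F 3] (hg : g ≠ 0) (x y : F) (h : (Wg g).Equation x y) : (Wg g).Nonsingular x y := by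
  rw [nonsingular_iff]
  refine ⟨h, ?_⟩
  left
  simp [Wg, three0, hg]

lemma curve_eq (P : (Wg g).Point) : yc P ^ 2 = xc P ^ 3 - g ^ 2 * xc P := by
  rcases P with _ | ⟨x, y, h⟩
  · simp [xc, yc]
  · exact (Wg_eq x y).mp h.1

lemma yc_neg (P : (Wg g).Point) : yc (-P) = - yc P := by
  rcases P with _ | ⟨x, y, h⟩
  · show yc (Point.zero : (Wg g).Point) = _; simp [yc]
  · rw [Point.neg_some]; exact Wg_negY x y

lemma xc_neg (P : (Wg g).Point) : xc (-P) = xc P := by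
  rcases P with _ | ⟨x, y, h⟩
  · rfl
  · rfl

lemma xc_inj {P Q : (Wg g).Point} (hP : P ≠ 0) (hQ : Q ≠ 0) (h : xc P = xc Q) : P = Q ∨ P = -Q := by
  rcases P with _ | ⟨x, y, hh⟩
  · exact absurd rfl hP
  rcases Q with _ | ⟨x', y', hh'⟩
  · exact absurd rfl hQ
  exact Point.X_eq_iff.mp h

lemma pt_ext {P Q : (Wg g).Point} (hP : P ≠ 0) (hQ : Q ≠ 0) (h : xc P = xc Q) (h' : yc P = yc Q) : P = Q := by
  rcases P with _ | ⟨x, y, hh⟩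
  · exact absurd rfl hP
  rcases Q with _ | ⟨x', y', hh'⟩
  · exact absurd rfl hQ
  simp only [xc, yc] at h h'
  subst h; subst h'; rfl

lemma add_X_ne {P Q : (Wg g).Point} (hP : P ≠ 0) (hQ : Q ≠ 0) (h : xc P ≠ xc Q) :
    P + Q ≠ 0 ∧ xc (P + Q) = ((yc P - yc Q) / (xc P - xc Q)) ^ 2 - xc P - xc Q ∧
    yc (P + Q) = - (((yc P - yc Q) / (xc P - xc Q)) * (xc (P + Q) - xc P) + yc P) := by
  rcases P with _ | ⟨x, y, hh⟩
  · exact absurd rfl hP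
  rcases Q with _ | ⟨x', y', hh'⟩
  · exact absurd rfl hQ
  simp only [xc, yc] at h ⊢
  rw [Point.add_of_X_ne h]
  refine ⟨Point.some_ne_zero _, ?_, ?_⟩
  · simp only [slope_of_X_ne h, addX]; simp [Wg]
  · simp only [slope_of_X_ne h, addY, negAddY, Wg_negY, addX]

lemma yc_add_sub [CharP F 3] {P Q : (Wg g).Point} (hP : P ≠ 0) (hQ : Q ≠ 0) (h : xc P ≠ xc Q) :
    (yc (P + Q) + yc (P - Q)) * (xc P - xc Q) ^ 3 =
      yc P * (yc Q ^ 2 - g ^ 2 * (xc P - xc Q)) := by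
  obtain ⟨_, h1, h2⟩ := add_X_ne hP hQ h
  obtain ⟨_, h3, h4⟩ := add_X_ne hP (neg_ne_zero.mpr hQ) (by rwa [xc_neg])
  rw [xc_neg, yc_neg] at h3 h4
  rw [sub_eq_add_neg, h2, h4, h1, h3]
  have hne := sub_ne_zero.mpr h
  have e1 := curve_eq P
  have e2 := curve_eq Q
  have hc3 : (3 : F) = 0 := three0
  generalize yc P = y at *
  generalize yc Q = b at *
  generalize hx : xc P = x at *
  generalize ha : xc Q = a at *
  have key : (-((y - b) * ((y-b)^2 - (2 * x + a) * (x - a)^2) + y * (x-a)^3) - ((y + b) * ((y+b)^2 - (2*x + a) * (x - a)^2) + y * (x-a)^3))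
     = y * (b ^ 2 - g ^ 2 * (x - a)) := by
    linear_combination (-2*y) * e1 - 7 * y * e2 + (-2*y*x*a^2 + y*x*g^2 + 2*y*a*g^2 - y*a^3) * hc3
  rw [← key]
  field_simp
  ring

/-- The automorphism `(x,y) ↦ (x+g,y)` as function. -/
def sigf [CharP F 3] (P : (Wg g).Point) : (Wg g).Point :=
  match P with
  | .zero => .zero
  | .some x y h => .some (x + g) y (by
      have hs := h
      rw [nonsingular_iff, Wg_eq] at h ⊢
      have h3 : (3 : F) = 0 := three0
      refine ⟨?_, ?_⟩
      · rw [h.1]; linear_combination (-(x ^ 2 * g + x * g ^ 2)) * h3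
      · rcases h.2 with h2 | h2
        · left
          simp only [Wg, h3] at h2 ⊢
          simpa using h2
        · right
          simpa [Wg] using h2)


variable [CharP F 3]

lemma sigf_ne {P : (Wg g).Point} (hP : P ≠ 0) : sigf P ≠ 0 := by
  rcases P with _ | ⟨x, y, hh⟩
  · exact absurd rfl hP
  · exact Point.some_ne_zero _

lemma sigf_zero : sigf (0 : (Wg g).Point) = 0 := rfl

lemma xc_sigf {P : (Wg g).Point} (hP : P ≠ 0) : xc (sigf P) = xc P + g := by
  rcases P with _ | ⟨x, y, hh⟩
  · exact absurd rfl hP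
  · rfl

lemma yc_sigf (P : (Wg g).Point) : yc (sigf P) = yc P := by
  rcases P with _ | ⟨x, y, hh⟩
  · rfl
  · rfl

lemma sigf_neg (P : (Wg g).Point) : sigf (-P) = - sigf P := by
  by_cases hP : P = 0
  · rw [hP]; rfl
  · apply pt_ext (sigf_ne (neg_ne_zero.mpr hP)) (neg_ne_zero.mpr (sigf_ne hP))
    · rw [xc_sigf (neg_ne_zero.mpr hP), xc_neg, xc_neg, xc_sigf hP]
    · rw [yc_sigf, yc_neg, yc_neg, yc_sigf]

lemma add_self' {P : (Wg g).Point} (hP : P ≠ 0) (hy : yc P ≠ 0) :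
    P + P ≠ 0 ∧ xc (P + P) = (g ^ 2 / yc P) ^ 2 - xc P - xc P ∧
    yc (P + P) = - ((g ^ 2 / yc P) * (xc (P + P) - xc P) + yc P) := by
  rcases P with _ | ⟨x, y, hh⟩
  · exact absurd rfl hP
  simp only [xc, yc] at hy ⊢
  have hy' : y ≠ (Wg g).negY x y := by
    rw [Wg_negY]
    intro h
    have : 2 * y = 0 := by linear_combination h
    exact hy ((mul_eq_zero.mp this).resolve_left two0)
  have hsl : (Wg g).slope x x y y = g ^ 2 / y := by
    rw [slope_of_Y_ne rfl hy', Wg_negY]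
    have : y - -y ≠ 0 := by
      rw [Wg_negY] at hy'
      exact sub_ne_zero.mpr hy'
    rw [div_eq_div_iff this hy]
    simp only [Wg]
    linear_combination (x ^ 2 * y - g ^ 2 * y) * (three0 : (3 : F) = 0)
  rw [Point.add_self_of_Y_ne hy']
  refine ⟨Point.some_ne_zero _, ?_, ?_⟩
  · simp only [hsl, addX]; simp [Wg]
  · simp only [hsl, addY, negAddY, Wg_negY, addX]

lemma neg_eq_of_yc {P : (Wg g).Point} (hP : P ≠ 0) (h : yc P = 0) : -P = P := by
  apply pt_ext (neg_ne_zero.mpr hP) hP (xc_neg P)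
  rw [yc_neg, h, neg_zero]

lemma yc_of_neg_eq {P : (Wg g).Point} (h : P = -P) : yc P = 0 := by
  have h1 : yc P = yc (-P) := congrArg yc h
  rw [yc_neg] at h1
  have : 2 * yc P = 0 := by linear_combination h1
  exact (mul_eq_zero.mp this).resolve_left two0

lemma sigf_add (P Q : (Wg g).Point) : sigf (P + Q) = sigf P + sigf Q := by
  by_cases hP : P = 0
  · rw [hP, sigf_zero, zero_add, zero_add]
  by_cases hQ : Q = 0
  · rw [hQ, sigf_zero, add_zero, add_zero]
  by_cases hx : xc P = xc Q
  · by_cases hn : P = -Q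
    · rw [hn, sigf_neg, neg_add_cancel, neg_add_cancel, sigf_zero]
    · have hPQ : P = Q := (xc_inj hP hQ hx).resolve_right hn
      subst hPQ
      have hy : yc P ≠ 0 := fun h => hn (neg_eq_of_yc hP h).symm
      obtain ⟨h1, h2, h3⟩ := add_self' hP hy
      obtain ⟨h1', h2', h3'⟩ := add_self' (sigf_ne hP) (by rwa [yc_sigf])
      have hX : xc (sigf (P + P)) = xc (sigf P + sigf P) := by
        rw [xc_sigf h1, h2, h2', yc_sigf, xc_sigf hP]
        linear_combination g * (three0 : (3 : F) = 0)
      apply pt_ext (sigf_ne h1) h1' hX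
      rw [h3', ← hX, yc_sigf, h3, xc_sigf h1, xc_sigf hP, yc_sigf]
      ring
  · obtain ⟨h1, h2, h3⟩ := add_X_ne hP hQ hx
    have hx' : xc (sigf P) ≠ xc (sigf Q) := by
      rw [xc_sigf hP, xc_sigf hQ]
      exact fun h => hx (add_right_cancel h)
    obtain ⟨h1', h2', h3'⟩ := add_X_ne (sigf_ne hP) (sigf_ne hQ) hx'
    have hX : xc (sigf (P + Q)) = xc (sigf P + sigf Q) := by
      rw [xc_sigf h1, h2, h2', yc_sigf, yc_sigf, xc_sigf hP, xc_sigf hQ, add_sub_add_right_eq_sub]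
      linear_combination g * (three0 : (3 : F) = 0)
    apply pt_ext (sigf_ne h1) h1' hX
    rw [h3', ← hX, yc_sigf, h3, xc_sigf h1, xc_sigf hP, xc_sigf hQ, yc_sigf, yc_sigf,
      add_sub_add_right_eq_sub, add_sub_add_right_eq_sub]

/-- The automorphism `(x,y) ↦ (x+g,y)`. -/
def sig : (Wg g).Point →+ (Wg g).Point where
  toFun := sigf
  map_zero' := sigf_zero
  map_add' := sigf_add

lemma sig_rel (hg : g ≠ 0) (P : (Wg g).Point) : P + sig P + sig (sig P) = 0 := by
  by_cases hP : P = 0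
  · simp [hP]
  have hx : xc P ≠ xc (sigf P) := by
    rw [xc_sigf hP]; simpa using hg
  obtain ⟨h1, h2, h3⟩ := add_X_ne hP (sigf_ne hP) hx
  have : P + sigf P = - sigf (sigf P) := by
    apply pt_ext h1 (neg_ne_zero.mpr (sigf_ne (sigf_ne hP)))
    · rw [h2, yc_sigf, xc_neg, xc_sigf (sigf_ne hP), xc_sigf hP]
      simp only [sub_self, zero_div]
      linear_combination (-xc P - g) * (three0 : (3 : F) = 0)
    · rw [h3, yc_sigf, yc_neg, yc_sigf, yc_sigf]
      simp
  show P + sigf P + sigf (sigf P) = 0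
  rw [this, neg_add_cancel]

lemma card_pt [Fintype F] (hg : g ≠ 0) : Finite (Wg g).Point ∧ Nat.card (Wg g).Point =
    Nat.card {p : F × F // p.2 ^ 2 = p.1 ^ 3 - g ^ 2 * p.1} + 1 := by
  have e : (Wg g).Point ≃ Option {p : F × F // p.2 ^ 2 = p.1 ^ 3 - g ^ 2 * p.1} :=
    { toFun := fun P => match P with
        | .zero => none
        | .some x y h => some ⟨(x, y), (Wg_eq x y).mp h.1⟩
      invFun := fun o => match o with
        | none => .zero
        | some p => .some p.1.1 p.1.2 (Wg_ns hg _ _ ((Wg_eq _ _).mpr p.2))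
      left_inv := by rintro (_ | _) <;> rfl
      right_inv := by rintro (_ | _) <;> rfl }
  refine ⟨Finite.of_equiv _ e.symm, ?_⟩
  rw [Nat.card_congr e, Finite.card_option]

lemma two_tors (P : (Wg g).Point) (h : yc P = 0) (hP : P ≠ 0) : xc P = 0 ∨ xc P = g ∨ xc P = -g := by
  have := curve_eq P
  rw [h] at this
  have : xc P * ((xc P - g) * (xc P + g)) = 0 := by linear_combination -this
  rcases mul_eq_zero.mp this with h | h
  · exact Or.inl h
  · rcases mul_eq_zero.mp h with h | h
    · exact Or.inr (Or.inl (sub_eq_zero.mp h))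
    · exact Or.inr (Or.inr (eq_neg_of_add_eq_zero_left h))

end
end LRC


namespace LRC

set_option linter.unusedSectionVars false
set_option linter.unusedSimpArgs false

open WeierstrassCurve WeierstrassCurve.Affine Polynomial

section
variable {F : Type*} [Field F] [DecidableEq F] {g : F}

/-- elements of the coordinate ring -/
noncomputable def el (g : F) : (F[X] × F[X]) →ₗ[F] (Wg g).CoordinateRing where
  toFun p := p.1 • (1 : (Wg g).CoordinateRing) + p.2 • CoordinateRing.mk (Wg g) X
  map_add' p q := by simp only [Prod.fst_add, Prod.snd_add, add_smul]; abel
  map_smul' c p := by simp only [Prod.smul_fst, Prod.smul_snd, smul_assoc, RingHom.id_apply, smul_add]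

lemma el_apply (p q : F[X]) : el g (p, q) =
  p • (1 : (Wg g).CoordinateRing) + q • CoordinateRing.mk (Wg g) X := rfl

lemma el_inj : Function.Injective (el g) := by
  rw [injective_iff_map_eq_zero]
  rintro ⟨p, q⟩ h
  obtain ⟨h1, h2⟩ := CoordinateRing.smul_basis_eq_zero h
  exact Prod.ext h1 h2

lemma el_surj (u : (Wg g).CoordinateRing) : ∃ p q, u = el g (p, q) := by
  obtain ⟨p, q, h⟩ := CoordinateRing.exists_smul_basis_eq u
  exact ⟨p, q, h.symm⟩

lemma deg_el (p q : F[X]) : (Algebra.norm F[X] (el g (p, q))).degree =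
    max (2 • p.degree) (2 • q.degree + 3) := CoordinateRing.degree_norm_smul_basis p q

/-- Riemann-Roch space `L(kO)`. -/
noncomputable def Rk (g : F) (k : ℕ) : Submodule F (Wg g).CoordinateRing :=
  ((degreeLT F (k / 2 + 1)).prod (degreeLT F ((k - 1) / 2))).map (el g)

lemma mem_Rk_el (k : ℕ) (p q : F[X]) : el g (p, q) ∈ Rk g k ↔
    p.degree < ((k / 2 + 1 : ℕ) : WithBot ℕ) ∧ q.degree < (((k - 1) / 2 : ℕ) : WithBot ℕ) := by
  unfold Rk
  rw [Submodule.mem_map]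
  constructor
  · rintro ⟨y, hy, h⟩
    have := el_inj h
    subst this
    simpa [Submodule.mem_prod, mem_degreeLT] using hy
  · intro h
    refine ⟨(p, q), ?_, rfl⟩
    simpa [Submodule.mem_prod, mem_degreeLT] using h

lemma mem_Rk (k : ℕ) (u : (Wg g).CoordinateRing) : u ∈ Rk g k ↔ (Algebra.norm F[X] u).degree ≤ k := by
  obtain ⟨p, q, rfl⟩ := el_surj u
  rw [mem_Rk_el, deg_el, max_le_iff]
  have e3 : ((3 : WithBot ℕ)) = ((3 : ℕ) : WithBot ℕ) := rfl
  refine and_congr ?_ ?_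
  · by_cases hp : p = 0
    · simp [hp, WithBot.bot_lt_coe, two_nsmul]
    · rw [degree_eq_natDegree hp, two_nsmul]; norm_cast; omega
  · by_cases hp : q = 0
    · simp [hp, WithBot.bot_lt_coe, two_nsmul]
    · rw [degree_eq_natDegree hp, two_nsmul, e3]; norm_cast; omega

lemma Rk_mono {k l : ℕ} (h : k ≤ l) : Rk g k ≤ Rk g l := by
  intro u hu
  rw [mem_Rk] at *
  exact hu.trans (by exact_mod_cast h)

lemma Rk_mul {k l : ℕ} {u v : (Wg g).CoordinateRing} (hu : u ∈ Rk g k) (hv : v ∈ Rk g l) :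
    u * v ∈ Rk g (k + l) := by
  rw [mem_Rk] at *
  rw [map_mul, degree_mul]
  push_cast
  exact add_le_add hu hv

lemma one_mem_Rk : (1 : (Wg g).CoordinateRing) ∈ Rk g 0 := by
  rw [mem_Rk, map_one]; simp

lemma Rk_pow {k : ℕ} {u : (Wg g).CoordinateRing} (hu : u ∈ Rk g k) (n : ℕ) :
    u ^ n ∈ Rk g (k * n) := by
  induction n with
  | zero => simpa using one_mem_Rk
  | succ n ih => rw [pow_succ, mul_add, mul_one]; exact Rk_mul ih hu

/-- coordinates on `Rk` -/
noncomputable def RkEquiv (g : F) (k : ℕ) : Rk g k ≃ₗ[F] ((Fin (k / 2 + 1) → F) × (Fin ((k - 1) / 2) → F)) :=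
  (Submodule.equivMapOfInjective (el g) el_inj _).symm.trans
    ({ toFun := fun p => (⟨p.1.1, p.2.1⟩, ⟨p.1.2, p.2.2⟩)
       map_add' := fun _ _ => rfl
       map_smul' := fun _ _ => rfl
       invFun := fun p => ⟨(p.1.1, p.2.1), ⟨p.1.2, p.2.2⟩⟩
       left_inv := fun _ => rfl
       right_inv := fun _ => rfl } ≪≫ₗ
      ((degreeLTEquiv F _).prodCongr (degreeLTEquiv F _)))

lemma finrank_Rk {k : ℕ} (hk : 1 ≤ k) : Module.finrank F (Rk g k) = k := by
  rw [(RkEquiv g k).finrank_eq, Module.finrank_prod, Module.finrank_fin_fun, Module.finrank_fin_fun]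
  omega

instance (k : ℕ) : FiniteDimensional F (Rk g k) :=
  Module.Finite.equiv (RkEquiv g k).symm

/-- evaluation at a point -/
noncomputable def ev (P : (Wg g).Point) : (Wg g).CoordinateRing →ₐ[F] F :=
  { AdjoinRoot.lift (evalRingHom (xc P)) (yc P) (by
      rw [eval₂_evalRingHom]
      exact (Wg_eq _ _).mpr (curve_eq P)) with
    commutes' := by
      intro r
      rw [IsScalarTower.algebraMap_apply F F[X] (Wg g).CoordinateRing]
      show AdjoinRoot.lift _ _ _ (AdjoinRoot.of _ (algebraMap F F[X] r)) = _
      rw [AdjoinRoot.lift_of]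
      simp }

lemma ev_mk (P : (Wg g).Point) (p : F[X][X]) :
    ev P (CoordinateRing.mk (Wg g) p) = p.evalEval (xc P) (yc P) := by
  rw [← eval₂_evalRingHom]
  exact AdjoinRoot.lift_mk (by
    rw [eval₂_evalRingHom]
    exact (Wg_eq _ _).mpr (curve_eq P)) p

lemma ev_el (P : (Wg g).Point) (p q : F[X]) :
    ev P (el g (p, q)) = p.eval (xc P) + q.eval (xc P) * yc P := by
  rw [el_apply, CoordinateRing.smul, CoordinateRing.smul, map_add, map_mul, map_mul, map_one, ev_mk,
    ev_mk, ev_mk]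
  simp [evalEval]

lemma ker_ev_max (P : (Wg g).Point) : (RingHom.ker (ev P)).IsMaximal := by
  apply RingHom.ker_isMaximal_of_surjective
  intro a
  exact ⟨algebraMap F _ a, by simp⟩

lemma XYIdeal_eq_ker {x y : F} (h : (Wg g).Nonsingular x y) :
    CoordinateRing.XYIdeal (Wg g) x (C y) = RingHom.ker (ev (Point.some x y h)) := by
  have hm : (CoordinateRing.XYIdeal (Wg g) x (C y)).IsMaximal := by
    apply Ideal.Quotient.maximal_of_isField
    exact (CoordinateRing.quotientXYIdealEquiv h.1).toMulEquiv.isField (Field.toIsField F)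
  apply hm.eq_of_le (ker_ev_max _).ne_top
  rw [CoordinateRing.XYIdeal, Ideal.span_le]
  rintro u (rfl | rfl)
  · simp only [SetLike.mem_coe, RingHom.mem_ker]
    rw [CoordinateRing.XClass]
    erw [ev_mk]
    simp [evalEval, xc]
  · simp only [SetLike.mem_coe, RingHom.mem_ker]
    rw [CoordinateRing.YClass]
    erw [ev_mk]
    simp [evalEval, yc]

lemma ker_ev_inj {P Q : (Wg g).Point} (hP : P ≠ 0) (hQ : Q ≠ 0) (h : RingHom.ker (ev P) = RingHom.ker (ev Q)) :
    P = Q := by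
  apply pt_ext hP hQ
  · have : el g (X - C (xc P), 0) ∈ RingHom.ker (ev P) := by
      rw [RingHom.mem_ker]; erw [ev_el]; simp
    rw [h, RingHom.mem_ker] at this
    erw [ev_el] at this
    simp at this
    linear_combination -this
  · have : el g (-C (yc P), 1) ∈ RingHom.ker (ev P) := by
      rw [RingHom.mem_ker]; erw [ev_el]; simp
    rw [h, RingHom.mem_ker] at this
    erw [ev_el] at this
    simp at this
    linear_combination -this


/-- evaluation at a set of points -/
noncomputable def evZ (Z : Finset (Wg g).Point) : (Wg g).CoordinateRing →ₗ[F] (Z → F) :=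
  LinearMap.pi (fun P => (ev P.1).toLinearMap)

lemma evZ_apply (Z : Finset (Wg g).Point) (u) (P : Z) : evZ Z u P = ev P.1 u := rfl

lemma coprime_Z (Z : Finset (Wg g).Point) (hZ : ∀ P ∈ Z, P ≠ 0) :
    Pairwise (Function.onFun IsCoprime (fun P : Z => RingHom.ker (ev P.1))) := by
  intro P Q h
  have := ker_ev_max P.1
  have := ker_ev_max Q.1
  apply Ideal.isCoprime_of_isMaximal
  intro h'
  exact h (Subtype.ext (ker_ev_inj (hZ _ P.2) (hZ _ Q.2) h'))

lemma evZ_surj (Z : Finset (Wg g).Point) (hZ : ∀ P ∈ Z, P ≠ 0) : Function.Surjective (evZ Z) := by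
  intro v
  obtain ⟨u, hu⟩ := Ideal.exists_forall_sub_mem_ideal (coprime_Z Z hZ)
    (fun P => algebraMap F _ (v P))
  refine ⟨u, funext fun P => ?_⟩
  have := hu P
  rw [RingHom.mem_ker, map_sub] at this
  rw [evZ_apply, sub_eq_zero.mp this]
  simp

lemma isUnit_of_norm {u : (Wg g).CoordinateRing} (hu : u ≠ 0) (h : (Algebra.norm F[X] u).natDegree = 0) :
    IsUnit u := by
  obtain ⟨c, hc⟩ := natDegree_eq_zero.mp h
  have hn : Algebra.norm F[X] u ≠ 0 := by
    have := Module.Finite.of_basis (CoordinateRing.basis (Wg g))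
    rw [Algebra.norm_ne_zero_iff]; exact hu
  have hc0 : IsUnit (Algebra.norm F[X] u) := by
    rw [← hc] at hn ⊢
    exact isUnit_C.mpr (isUnit_iff_ne_zero.mpr (fun h => hn (by rw [h, C_0])))
  obtain ⟨p, q, rfl⟩ := el_surj u
  have := CoordinateRing.coe_norm_smul_basis (W' := Wg g) p q
  have h2 := hc0.map (algebraMap F[X] (Wg g).CoordinateRing)
  have h3 : algebraMap F[X] (Wg g).CoordinateRing (Algebra.norm F[X] (el g (p, q))) = _ := this
  rw [h3, map_mul] at h2
  have h4 := isUnit_of_mul_isUnit_left h2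
  rw [el_apply, CoordinateRing.smul, CoordinateRing.smul, mul_one, ← map_mul, ← map_add]
  exact h4

lemma fin_quot {u : (Wg g).CoordinateRing} (hu : u ≠ 0) :
    FiniteDimensional F ((Wg g).CoordinateRing ⧸ Ideal.span {u}) := by
  have h1 := finrank_quotient_span_eq_natDegree_norm (CoordinateRing.basis (Wg g)) hu
  by_cases h : (Algebra.norm F[X] u).natDegree = 0
  · have := isUnit_of_norm hu h
    have : Ideal.span {u} = ⊤ := Ideal.span_singleton_eq_top.mpr this
    rw [this]
    infer_instance
  · apply Module.finite_of_finrank_pos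
    omega

lemma natDegree_le_of_mem {u : (Wg g).CoordinateRing} {k : ℕ} (h : u ∈ Rk g k) :
    (Algebra.norm F[X] u).natDegree ≤ k := natDegree_le_of_degree_le ((mem_Rk k u).mp h)

/-- factor map -/
noncomputable def evQ (Z : Finset (Wg g).Point) (u : (Wg g).CoordinateRing) (hu : ∀ P ∈ Z, ev P u = 0) :
    ((Wg g).CoordinateRing ⧸ Ideal.span {u}) →ₗ[F] (Z → F) :=
  Submodule.liftQ ((Ideal.span {u}).restrictScalars F) (evZ Z) (by
    intro v hv
    obtain ⟨w, rfl⟩ := Ideal.mem_span_singleton'.mp hv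
    rw [LinearMap.mem_ker]
    funext P
    rw [evZ_apply, map_mul, hu P.1 P.2, mul_zero]; rfl)

lemma evQ_surj (Z : Finset (Wg g).Point) (hZ : ∀ P ∈ Z, P ≠ 0)
    (u : (Wg g).CoordinateRing) (hu : ∀ P ∈ Z, ev P u = 0) : Function.Surjective (evQ Z u hu) := by
  intro v
  obtain ⟨w, hw⟩ := evZ_surj Z hZ v
  exact ⟨Submodule.Quotient.mk w, hw⟩

theorem zero_count {k : ℕ} {u : (Wg g).CoordinateRing} (hu : u ∈ Rk g k) (hu0 : u ≠ 0)
    (Z : Finset (Wg g).Point) (hZ : ∀ P ∈ Z, P ≠ 0) (hZu : ∀ P ∈ Z, ev P u = 0) : Z.card ≤ k := by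
  have := fin_quot hu0
  have h1 := LinearMap.finrank_le_finrank_of_surjective (evQ_surj Z hZ u hZu)
  rw [Module.finrank_fintype_fun_eq_card, Fintype.card_coe,
    finrank_quotient_span_eq_natDegree_norm (CoordinateRing.basis (Wg g)) hu0] at h1
  exact h1.trans (natDegree_le_of_mem hu)

/-- ideal as unit -/
noncomputable def IU (P : (Wg g).Point) :
    (FractionalIdeal (nonZeroDivisors (Wg g).CoordinateRing) (Wg g).FunctionField)ˣ :=
  match P with
  | .zero => 1
  | .some _ _ h => CoordinateRing.XYIdeal' h

lemma IU_coe {P : (Wg g).Point} (hP : P ≠ 0) :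
    (IU P : FractionalIdeal (nonZeroDivisors (Wg g).CoordinateRing) (Wg g).FunctionField) =
      ((RingHom.ker (ev P) : Ideal (Wg g).CoordinateRing) : FractionalIdeal _ _) := by
  rcases P with _ | ⟨x, y, hh⟩
  · exact absurd rfl hP
  · rw [← XYIdeal_eq_ker]
    exact CoordinateRing.XYIdeal'_eq hh

lemma toClass_IU {P : (Wg g).Point} (hP : P ≠ 0) :
    Point.toClass P = Additive.ofMul (ClassGroup.mk (Wg g).FunctionField (IU P)) := by
  rcases P with _ | ⟨x, y, hh⟩
  · exact absurd rfl hP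
  · exact Point.toClass_some hh

theorem sum_zero {k : ℕ} {u : (Wg g).CoordinateRing} (hu : u ∈ Rk g k) (hu0 : u ≠ 0)
    (Z : Finset (Wg g).Point) (hZ : ∀ P ∈ Z, P ≠ 0) (hZu : ∀ P ∈ Z, ev P u = 0) (hk : Z.card = k) :
    ∑ P ∈ Z, P = 0 := by
  have := fin_quot hu0
  have h1 := LinearMap.finrank_le_finrank_of_surjective (evQ_surj Z hZ u hZu)
  have hfr : Module.finrank F ((Wg g).CoordinateRing ⧸ Ideal.span {u}) = Module.finrank F (Z → F) := by
    rw [Module.finrank_fintype_fun_eq_card, Fintype.card_coe,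
      finrank_quotient_span_eq_natDegree_norm (CoordinateRing.basis (Wg g)) hu0] at h1 ⊢
    have := natDegree_le_of_mem hu
    omega
  have hinj : Function.Injective (evQ Z u hZu) :=
    (LinearMap.injective_iff_surjective_of_finrank_eq_finrank hfr).mpr (evQ_surj Z hZ u hZu)
  have hid : ∏ P ∈ Z, RingHom.ker (ev P) = Ideal.span {u} := by
    rw [← Finset.prod_coe_sort, Ideal.prod_eq_iInf_of_pairwise_isCoprime
      (fun P _ Q _ h => coprime_Z Z hZ h)]
    apply le_antisymm
    · intro v hv
      simp only [Ideal.mem_iInf, Finset.mem_univ, true_imp_iff] at hv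
      have : evQ Z u hZu (Submodule.Quotient.mk v) = 0 := by
        funext P
        exact (RingHom.mem_ker).mp (hv P)
      have := hinj (this.trans (map_zero _).symm)
      exact (Submodule.Quotient.mk_eq_zero _).mp this
    · rw [Ideal.span_singleton_le_iff_mem]
      simp only [Ideal.mem_iInf, Finset.mem_univ, true_imp_iff]
      intro P
      exact hZu P.1 P.2
  apply Point.toClass_injective
  rw [map_sum, map_zero]
  rw [Finset.sum_congr rfl (fun P hP => toClass_IU (hZ P hP)), ← ofMul_prod, ← map_prod]
  apply ofMul_eq_zero.mpr
  apply (ClassGroup.mk_eq_one_of_coe_ideal (I' := Ideal.span {u}) ?_).mpr ⟨u, hu0, rfl⟩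
  rw [← hid, Units.coe_prod]
  refine Eq.trans ?_ (map_prod (FractionalIdeal.coeIdealHom (nonZeroDivisors (Wg g).CoordinateRing) (Wg g).FunctionField)
    (fun P => (RingHom.ker (ev P) : Ideal (Wg g).CoordinateRing)) Z).symm
  exact Finset.prod_congr rfl (fun P hP => IU_coe (hZ P hP))

end
end LRC


namespace LRC

set_option linter.unusedSectionVars false

open WeierstrassCurve WeierstrassCurve.Affine Polynomial

section
variable {F : Type*} [Field F] [DecidableEq F] {g : F} [CharP F 3]

/-- The function `z`. -/
def zf (HF : Finset (Wg g).Point) (P : (Wg g).Point) : F := ∑ τ ∈ HF, yc (P + τ)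

lemma zf_add (H : AddSubgroup (Wg g).Point) (HF : Finset (Wg g).Point) (hHF : ∀ P, P ∈ HF ↔ P ∈ H)
    (P : (Wg g).Point) {τ : (Wg g).Point} (hτ : τ ∈ H) : zf HF (P + τ) = zf HF P := by
  unfold zf
  apply Finset.sum_bij' (fun a _ => τ + a) (fun a _ => a - τ)
  · intro a ha; rw [hHF] at *; exact H.add_mem hτ ha
  · intro a ha; rw [hHF] at *; exact H.sub_mem ha hτ
  · intro a _; abel
  · intro a _; abel
  · intro a _; rw [add_assoc]

lemma sig_inj : Function.Injective (sig : (Wg g).Point →+ (Wg g).Point) := by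
  rw [injective_iff_map_eq_zero]
  intro a ha
  by_contra h
  exact sigf_ne h ha

lemma zf_sig (H : AddSubgroup (Wg g).Point) (hH : Stab sig H)
    (HF : Finset (Wg g).Point) (hHF : ∀ P, P ∈ HF ↔ P ∈ H)
    (P : (Wg g).Point) : zf HF (sig P) = zf HF P := by
  unfold zf
  have himg : HF.image sig = HF := by
    apply Finset.eq_of_subset_of_card_le
    · intro a ha
      obtain ⟨b, hb, rfl⟩ := Finset.mem_image.mp ha
      rw [hHF] at *
      exact hH b hb
    · rw [Finset.card_image_of_injective _ sig_inj]
  conv_lhs => rw [← himg]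
  rw [Finset.sum_image (fun a _ b _ h => sig_inj h)]
  apply Finset.sum_congr rfl
  intro τ _
  rw [← map_add]
  exact yc_sigf _

lemma zf_poly (H : AddSubgroup (Wg g).Point)
    (HF : Finset (Wg g).Point) (hHF : ∀ P, P ∈ HF ↔ P ∈ H) (M : F[X]) (hM : M.Monic)
    (hdvd : ∀ τ ∈ HF, τ ≠ 0 → (X - C (xc τ)) ^ 3 ∣ (C (yc τ ^ 2) - C (g ^ 2) * (X - C (xc τ))) * M) :
    ∃ B : F[X], B ≠ 0 ∧ B.natDegree = M.natDegree ∧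
      ∀ P, P ∉ H → zf HF P * M.eval (xc P) = yc P * B.eval (xc P) := by
  have hex : ∀ τ : (Wg g).Point, ∃ c : F[X], τ ∈ HF → τ ≠ 0 →
      (C (yc τ ^ 2) - C (g ^ 2) * (X - C (xc τ))) * M = (X - C (xc τ)) ^ 3 * c := by
    intro τ
    by_cases h : τ ∈ HF ∧ τ ≠ 0
    · obtain ⟨c, hc⟩ := hdvd τ h.1 h.2
      exact ⟨c, fun _ _ => hc⟩
    · exact ⟨0, fun h1 h2 => absurd ⟨h1, h2⟩ h⟩
  choose c hc using hex
  have hcd : ∀ τ ∈ HF.erase 0, (c τ).degree < M.degree := by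
    intro τ hτ
    rw [Finset.mem_erase] at hτ
    have h1 := congrArg degree (hc τ hτ.2 hτ.1)
    rw [degree_mul, degree_mul, degree_pow, degree_X_sub_C] at h1
    have h2 : (C (yc τ ^ 2) - C (g ^ 2) * (X - C (xc τ))).degree ≤ 1 := by
      refine (degree_sub_le _ _).trans (max_le (degree_C_le.trans (by norm_num)) ?_)
      exact (degree_mul_le _ _).trans ((add_le_add degree_C_le (degree_X_sub_C_le _)).trans (by norm_num))
    by_cases h0 : c τ = 0
    · rw [h0, degree_zero, bot_lt_iff_ne_bot]
      exact fun h => hM.ne_zero (degree_eq_bot.mp h)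
    · have h3 : 3 • (1 : WithBot ℕ) + (c τ).degree ≤ 1 + M.degree := by
        rw [← h1]; exact add_le_add h2 le_rfl
      rw [degree_eq_natDegree h0, degree_eq_natDegree hM.ne_zero] at h3 ⊢
      have e3 : 3 • (1 : WithBot ℕ) = ((3 : ℕ) : WithBot ℕ) := rfl
      rw [e3] at h3
      norm_cast at h3 ⊢
      omega
  have hsd : (∑ τ ∈ HF.erase 0, c τ).degree < M.degree := by
    rw [degree_eq_natDegree hM.ne_zero, ← mem_degreeLT]
    apply Submodule.sum_mem
    intro τ hτ
    rw [mem_degreeLT, ← degree_eq_natDegree hM.ne_zero]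
    exact hcd τ hτ
  have hBd := degree_sub_eq_left_of_degree_lt hsd
  refine ⟨M - ∑ τ ∈ HF.erase 0, c τ, ?_, natDegree_eq_of_degree_eq hBd, ?_⟩
  · intro h
    rw [h, degree_zero] at hBd
    exact hM.ne_zero (degree_eq_bot.mp hBd.symm)
  intro P hP
  have hP0 : P ≠ 0 := fun h => hP (h ▸ H.zero_mem)
  have hx : ∀ τ ∈ HF, τ ≠ 0 → xc P ≠ xc τ := by
    intro τ hτ h0 h
    rw [hHF] at hτ
    rcases xc_inj hP0 h0 h with h | h
    · exact hP (h ▸ hτ)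
    · exact hP (h ▸ H.neg_mem hτ)
  have hterm : ∀ τ ∈ HF.erase 0, (yc (P + τ) + yc (P - τ)) * M.eval (xc P) = yc P * (c τ).eval (xc P) := by
    intro τ hτ
    rw [Finset.mem_erase] at hτ
    have h1 := yc_add_sub hP0 hτ.1 (hx τ hτ.2 hτ.1)
    have h2 := congrArg (eval (xc P)) (hc τ hτ.2 hτ.1)
    simp only [eval_mul, eval_sub, eval_C, eval_X, eval_pow] at h2
    apply mul_right_cancel₀ (pow_ne_zero 3 (sub_ne_zero.mpr (hx τ hτ.2 hτ.1)))
    linear_combination (M.eval (xc P)) * h1 + yc P * h2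
  have hsum := Finset.sum_congr rfl hterm
  rw [← Finset.sum_mul, ← Finset.mul_sum, Finset.sum_add_distrib] at hsum
  have hneg : ∑ τ ∈ HF.erase 0, yc (P - τ) = ∑ τ ∈ HF.erase 0, yc (P + τ) := by
    refine Finset.sum_bij' (fun a _ => -a) (fun a _ => -a) ?_ ?_ ?_ ?_ ?_
    · intro a ha
      rw [Finset.mem_erase, hHF] at *
      exact ⟨neg_ne_zero.mpr ha.1, H.neg_mem ha.2⟩
    · intro a ha
      rw [Finset.mem_erase, hHF] at *
      exact ⟨neg_ne_zero.mpr ha.1, H.neg_mem ha.2⟩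
    · intro a _; exact neg_neg a
    · intro a _; exact neg_neg a
    · intro a _; rw [sub_eq_add_neg]
  have hz : zf HF P = yc P + ∑ τ ∈ HF.erase 0, yc (P + τ) := by
    unfold zf
    rw [← Finset.add_sum_erase HF _ ((hHF 0).mpr H.zero_mem), add_zero]
  rw [hneg] at hsum
  rw [hz, eval_sub, eval_finsetSum]
  linear_combination (-1) * hsum + (∑ τ ∈ HF.erase 0, yc (P + τ)) * (M.eval (xc P)) * (three0 : (3 : F) = 0)

lemma exists_D (X1 : Finset F) : ∃ D : F[X], D.Monic ∧ D.natDegree = 3 * X1.card ∧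
    (∀ ξ ∈ X1, (X - C ξ) ^ 3 ∣ D) ∧ ∀ x, x ∉ X1 → D.eval x ≠ 0 := by
  have hm : (∏ ξ ∈ X1, (X - C ξ)).Monic := monic_prod_of_monic _ _ (fun i _ => monic_X_sub_C _)
  refine ⟨(∏ ξ ∈ X1, (X - C ξ)) ^ 3, hm.pow 3, ?_, ?_, ?_⟩
  · rw [hm.natDegree_pow, natDegree_prod_of_monic _ _ (fun i _ => monic_X_sub_C _)]
    simp
  · intro ξ hξ
    have hd : (X - C ξ) ∣ ∏ ξ ∈ X1, (X - C ξ) := Finset.dvd_prod_of_mem (fun ξ => X - C ξ) hξ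
    exact pow_dvd_pow_of_dvd hd 3
  · intro x hx
    rw [eval_pow, eval_prod]
    apply pow_ne_zero
    rw [Finset.prod_ne_zero_iff]
    intro ξ hξ
    rw [eval_sub, eval_X, eval_C, sub_ne_zero]
    rintro rfl
    exact hx hξ

lemma exists_f (g : F) : ∃ f : F[X], f.Monic ∧ f.natDegree = 3 ∧ ∀ x, f.eval x = x ^ 3 - g ^ 2 * x := by
  refine ⟨X ^ 3 - C (g ^ 2) * X, by monicity!, by compute_degree!, fun x => by simp⟩

theorem exists_psi (hg : g ≠ 0) (H : AddSubgroup (Wg g).Point) (hH : Stab sig H)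
    (HF : Finset (Wg g).Point) (hHF : ∀ P, P ∈ HF ↔ P ∈ H) :
    ∃ ψ G : (Wg g).CoordinateRing, ψ ∈ Rk g (3 * HF.card - 3) ∧ G ∈ Rk g (3 * HF.card) ∧
      (∀ P, P ∉ H → ev P ψ ≠ 0 ∧ ev P G = zf HF P * ev P ψ) ∧ ∀ β : F, G - β • ψ ≠ 0 := by
  set H1 := (HF.erase 0).filter (fun τ => yc τ ≠ 0) with hH1
  set H2 := (HF.erase 0).filter (fun τ => ¬ yc τ ≠ 0) with hH2
  have hcard : H1.card + H2.card + 1 = HF.card := by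
    rw [hH1, hH2, Finset.card_filter_add_card_filter_not, Finset.card_erase_of_mem ((hHF 0).mpr H.zero_mem)]
    have : 0 < HF.card := Finset.card_pos.mpr ⟨0, (hHF 0).mpr H.zero_mem⟩
    omega
  have hm1 : ∀ τ, τ ∈ H1 ↔ (τ ≠ 0 ∧ τ ∈ H) ∧ yc τ ≠ 0 := by
    intro τ; rw [hH1, Finset.mem_filter, Finset.mem_erase, hHF]
  have hm2 : ∀ τ, τ ∈ H2 ↔ (τ ≠ 0 ∧ τ ∈ H) ∧ yc τ = 0 := by
    intro τ; rw [hH2, Finset.mem_filter, Finset.mem_erase, hHF, not_not]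
  set X1 := H1.image xc with hX1
  have hν : 2 * X1.card ≤ H1.card := by
    apply Finset.mul_card_image_le_card
    intro a ha
    obtain ⟨τ, hτ, rfl⟩ := Finset.mem_image.mp ha
    have hτ' := (hm1 τ).mp hτ
    have hne : τ ≠ -τ := fun h => hτ'.2 (yc_of_neg_eq h)
    rw [← Finset.card_pair hne]
    apply Finset.card_le_card
    intro b hb
    rw [Finset.mem_insert, Finset.mem_singleton] at hb
    rw [Finset.mem_filter]
    rcases hb with rfl | rfl
    · exact ⟨hτ, rfl⟩
    · refine ⟨(hm1 _).mpr ⟨⟨neg_ne_zero.mpr hτ'.1.1, H.neg_mem hτ'.1.2⟩, ?_⟩, xc_neg τ⟩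
      rw [yc_neg]; exact neg_ne_zero.mpr hτ'.2
  obtain ⟨D, hDm, hDd, hDdvd0, hDne0⟩ := exists_D X1
  have hDdvd : ∀ τ ∈ H1, (X - C (xc τ)) ^ 3 ∣ D := fun τ hτ =>
    hDdvd0 _ (Finset.mem_image_of_mem xc hτ)
  have hx : ∀ P, P ∉ H → ∀ τ ∈ H, τ ≠ 0 → xc P ≠ xc τ := by
    intro P hP τ hτ h0 h
    have hP0 : P ≠ 0 := fun h => hP (h ▸ H.zero_mem)
    rcases xc_inj hP0 h0 h with h | h
    · exact hP (h ▸ hτ)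
    · exact hP (h ▸ H.neg_mem hτ)
  have hDne : ∀ P, P ∉ H → D.eval (xc P) ≠ 0 := by
    intro P hP
    apply hDne0
    intro hξ
    obtain ⟨τ, hτ, h⟩ := Finset.mem_image.mp hξ
    exact hx P hP τ ((hm1 τ).mp hτ).1.2 ((hm1 τ).mp hτ).1.1 h.symm
  by_cases hT : ∃ τ, τ ∈ H2
  · -- three 2-torsion points
    obtain ⟨τ, hτ⟩ := hT
    have hτ' := (hm2 τ).mp hτ
    have hs : ∀ a ∈ H2, sig a ∈ H2 ∧ xc (sig a) = xc a + g := by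
      intro a ha
      rw [hm2] at *
      exact ⟨⟨⟨sigf_ne ha.1.1, hH a ha.1.2⟩, (yc_sigf a).trans ha.2⟩, xc_sigf ha.1.1⟩
    have h1 := hs τ hτ
    have h2 := hs _ h1.1
    have h3c : (3 : F) = 0 := three0
    have h3 : 3 ≤ H2.card := by
      have hsub : ({xc τ, xc τ + g, xc τ + g + g} : Finset F) ⊆ H2.image xc := by
        intro b hb
        simp only [Finset.mem_insert, Finset.mem_singleton] at hb
        rw [Finset.mem_image]
        rcases hb with rfl | rfl | rfl
        · exact ⟨τ, hτ, rfl⟩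
        · exact ⟨_, h1.1, h1.2⟩
        · exact ⟨_, h2.1, by rw [h2.2, h1.2]⟩
      have hc3 : ({xc τ, xc τ + g, xc τ + g + g} : Finset F).card = 3 := by
        rw [Finset.card_eq_three]
        refine ⟨_, _, _, ?_, ?_, ?_, rfl⟩
        · simpa using hg
        · intro h
          apply hg
          linear_combination h + g * h3c
        · simpa using hg
      calc 3 = _ := hc3.symm
        _ ≤ _ := Finset.card_le_card hsub
        _ ≤ _ := Finset.card_image_le
    obtain ⟨f, hfm, hfd, hfe0⟩ := exists_f g
    have hfe : ∀ P : (Wg g).Point, f.eval (xc P) = yc P ^ 2 := by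
      intro P; rw [curve_eq, hfe0]
    obtain ⟨B, hB0, hBd, hB⟩ := zf_poly H HF hHF (D * f ^ 2) (hDm.mul (hfm.pow 2)) (by
      intro τ hτ hτ0
      by_cases hy : yc τ = 0
      · have : (X - C (xc τ)) ∣ f := dvd_iff_isRoot.mpr (by rw [IsRoot.def, hfe, hy]; simp)
        rw [hy]
        have e : (C ((0 : F) ^ 2) - C (g ^ 2) * (X - C (xc τ))) * (D * f ^ 2) =
          ((X - C (xc τ)) * f ^ 2) * (- C (g ^ 2) * D) := by simp; ring
        rw [e, pow_succ' _ 2]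
        exact Dvd.dvd.mul_right (mul_dvd_mul_left _ (pow_dvd_pow_of_dvd this 2)) _
      · exact Dvd.dvd.mul_left (Dvd.dvd.mul_right (hDdvd τ ((hm1 τ).mpr ⟨⟨hτ0, (hHF τ).mp hτ⟩, hy⟩)) _) _)
    rw [(hDm).natDegree_mul (hfm.pow 2), natDegree_pow, hfd, hDd] at hBd
    have hyne : ∀ P, P ∉ H → yc P ≠ 0 := by
      intro P hP hy
      have hP0 : P ≠ 0 := fun h => hP (h ▸ H.zero_mem)
      have a1 := hx P hP _ hτ'.1.2 hτ'.1.1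
      have a2 := hx P hP _ ((hm2 _).mp h1.1).1.2 ((hm2 _).mp h1.1).1.1
      have a3 := hx P hP _ ((hm2 _).mp h2.1).1.2 ((hm2 _).mp h2.1).1.1
      rw [h2.2, h1.2] at a3
      rw [h1.2] at a2
      have e1 := hfe P
      have e2 := hfe τ
      rw [hy] at e1
      rw [hτ'.2] at e2
      have : (xc P - xc τ) * ((xc P - (xc τ + g)) * (xc P - (xc τ + g + g))) = 0 := by
        rw [hfe0] at e1 e2
        linear_combination e1 - e2 + (-(xc P)^2 * xc τ - (xc P)^2 * g + (xc P) * (xc τ) ^2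
          + 2 * (xc P) * (xc τ) * g + xc P * g^2 - (xc τ)^2 * g - xc τ * g^2) * h3c
      rcases mul_eq_zero.mp this with h | h
      · exact a1 (sub_eq_zero.mp h)
      · rcases mul_eq_zero.mp h with h | h
        · exact a2 (sub_eq_zero.mp h)
        · exact a3 (sub_eq_zero.mp h)
    refine ⟨el g (0, f * D), el g (B, 0), ?_, ?_, ?_, ?_⟩
    · rw [mem_Rk_el]
      refine ⟨by simp, ?_⟩
      rw [degree_eq_natDegree (hfm.mul hDm).ne_zero, hfm.natDegree_mul hDm, hfd, hDd]
      norm_cast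
      omega
    · rw [mem_Rk_el]
      refine ⟨?_, by simp⟩
      rw [degree_eq_natDegree hB0, hBd]
      norm_cast
      omega
    · intro P hP
      have hb := hB P hP
      rw [ev_el, ev_el, eval_mul, hfe]
      rw [eval_mul, eval_pow, hfe] at hb
      have hy := hyne P hP
      simp only [eval_zero, zero_add, zero_mul, add_zero]
      refine ⟨mul_ne_zero (mul_ne_zero (pow_ne_zero 2 hy) (hDne P hP)) hy, ?_⟩
      apply mul_left_cancel₀ hy
      linear_combination -hb
    · intro β h
      rw [← map_smul, ← map_sub] at h
      have := el_inj (h.trans (map_zero (el g)).symm)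
      have := congrArg Prod.fst this
      simp at this
      exact hB0 this
  · have hall : ∀ τ ∈ HF, τ ≠ 0 → τ ∈ H1 := by
      intro τ hτ h0
      by_contra h
      apply hT
      refine ⟨τ, (hm2 τ).mpr ⟨⟨h0, (hHF τ).mp hτ⟩, ?_⟩⟩
      by_contra h'
      exact h ((hm1 τ).mpr ⟨⟨h0, (hHF τ).mp hτ⟩, h'⟩)
    obtain ⟨B, hB0, hBd, hB⟩ := zf_poly H HF hHF D hDm (fun τ hτ h0 =>
      Dvd.dvd.mul_left (hDdvd τ (hall τ hτ h0)) _)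
    rw [hDd] at hBd
    refine ⟨el g (D, 0), el g (0, B), ?_, ?_, ?_, ?_⟩
    · rw [mem_Rk_el]
      refine ⟨?_, by simp⟩
      rw [degree_eq_natDegree hDm.ne_zero, hDd]
      norm_cast
      omega
    · rw [mem_Rk_el]
      refine ⟨by simp, ?_⟩
      rw [degree_eq_natDegree hB0, hBd]
      norm_cast
      omega
    · intro P hP
      have hb := hB P hP
      rw [ev_el, ev_el]
      simp only [eval_zero, zero_add, zero_mul, add_zero]
      refine ⟨hDne P hP, ?_⟩
      rw [hb, mul_comm]
    · intro β h
      rw [← map_smul, ← map_sub] at h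
      have := el_inj (h.trans (map_zero (el g)).symm)
      have := congrArg Prod.snd this
      simp at this
      exact hB0 this

end
end LRC


namespace LRC

open Polynomial

lemma vdm {F K : Type*} [Field F] [AddCommGroup K] [Module F K] {t m : ℕ} (htm : t < m)
    (β : Fin m → F) (hβ : Function.Injective β) (u : Fin (t + 1) → K)
    (h : ∀ j, ∑ k : Fin (t + 1), β j ^ (k : ℕ) • u k = 0) : ∀ k, u k = 0 := by
  intro k
  rw [← Module.forall_dual_apply_eq_zero_iff F]
  intro φ
  set p : F[X] := ∑ k : Fin (t + 1), monomial (k : ℕ) (φ (u k)) with hp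
  have hdeg : p.degree < ((t + 1 : ℕ) : WithBot ℕ) := by
    rw [← mem_degreeLT]
    apply Submodule.sum_mem
    intro i _
    rw [mem_degreeLT]
    exact (degree_monomial_le _ _).trans_lt (by exact_mod_cast i.2)
  have hp0 : p = 0 := by
    apply Polynomial.eq_zero_of_degree_lt_of_eval_index_eq_zero (s := Finset.univ) (v := β) (hβ.injOn)
    · simp only [Finset.card_univ, Fintype.card_fin]
      exact hdeg.trans_le (by exact_mod_cast htm)
    · intro j _
      have := congrArg φ (h j)
      rw [map_sum, map_zero] at this
      rw [hp, eval_finsetSum, ← this]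
      apply Finset.sum_congr rfl
      intro i _
      rw [eval_monomial, map_smul, smul_eq_mul, mul_comm]
  have := congrArg (fun q => coeff q (k : ℕ)) hp0
  simp only [hp, finsetSum_coeff, coeff_monomial, coeff_zero] at this
  rw [Finset.sum_eq_single k] at this
  · simpa using this
  · intro b _ hb
    rw [if_neg]
    exact fun h => hb (Fin.ext h)
  · simp

theorem coding {F K : Type*} [Field F] [DecidableEq F] [CommRing K] [Algebra F K]
    {N m t r δ : ℕ} (hr : 1 ≤ r) (hN : r + δ = N + 1) (hδ : 1 ≤ δ) (ht : 1 ≤ t) (htm : t < m)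
    (e : Fin N × Fin m → (K →ₐ[F] F)) (β : Fin m → F) (hβ : Function.Injective β)
    (U : Submodule F K) [FiniteDimensional F U] (hU : Module.finrank F U = r)
    (G ψ : K) (hψU : ψ ∈ U) (hψ : ∀ p, e p ψ ≠ 0) (hG : ∀ p, e p G = β p.2 * e p ψ)
    (hloc : ∀ j, ∀ u ∈ U, (Finset.univ.filter (fun i => e (i, j) u ≠ 0)).card < δ → u = 0)
    (S : Submodule F K) (hS : ∀ u ∈ U, ∀ i < t, u * G ^ i * ψ ^ (t - 1 - i) ∈ S) (hGS : G ^ t ∈ S)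
    (hcnt : ∀ f ∈ S, f ≠ 0 → (Finset.univ.filter (fun p => e p f = 0)).card ≤ N * t) :
    ExistsOptimalLRC F (N * m) (r * t + 1) (N * (m - t)) r δ := by
  classical
  have hN1 : 1 ≤ N := by omega
  let w : Fin m → (((Fin t → U) × F) →ₗ[F] K) := fun j =>
    (∑ k : Fin t, β j ^ (k : ℕ) • (U.subtype ∘ₗ LinearMap.proj k ∘ₗ LinearMap.fst F (Fin t → U) F)) +
      β j ^ t • ((LinearMap.toSpanSingleton F K ψ) ∘ₗ LinearMap.snd F (Fin t → U) F)
  have hw : ∀ j x, w j x = (∑ k : Fin t, β j ^ (k : ℕ) • (x.1 k : K)) + β j ^ t • (x.2 • ψ) := by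
    intro j x
    simp [w]
  have hwU : ∀ j x, w j x ∈ U := by
    intro j x
    rw [hw]
    exact U.add_mem (U.sum_mem fun k _ => U.smul_mem _ (x.1 k).2)
      (U.smul_mem _ (U.smul_mem _ hψU))
  let L : ((Fin t → U) × F) →ₗ[F] (Fin (N * m) → F) := LinearMap.pi fun n =>
    (e (finProdFinEquiv.symm n) ψ ^ (t - 1)) •
      ((e (finProdFinEquiv.symm n)).toLinearMap ∘ₗ w (finProdFinEquiv.symm n).2)
  have hL : ∀ x p, L x (finProdFinEquiv p) = e p ψ ^ (t - 1) * e p (w p.2 x) := by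
    intro x p
    show e (finProdFinEquiv.symm (finProdFinEquiv p)) ψ ^ (t - 1) * e (finProdFinEquiv.symm (finProdFinEquiv p)) (w (finProdFinEquiv.symm (finProdFinEquiv p)).2 x) = _
    rw [Equiv.symm_apply_apply]
  have hL0 : ∀ x p, L x (finProdFinEquiv p) = 0 ↔ e p (w p.2 x) = 0 := by
    intro x p
    rw [hL, mul_eq_zero_iff_left (pow_ne_zero _ (hψ p))]
  have hψ0 : ψ ≠ 0 := by
    intro h
    exact hψ (⟨0, hN1⟩, ⟨0, by omega⟩) (by rw [h, map_zero])
  -- injectivity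
  have hinj : Function.Injective L := by
    rw [injective_iff_map_eq_zero]
    intro x hx
    have h1 : ∀ j, w j x = 0 := by
      intro j
      apply hloc j _ (hwU j x)
      rw [Finset.filter_false_of_mem]
      · rw [Finset.card_empty]; exact hδ
      · intro i _
        rw [not_not]
        apply (hL0 x (i, j)).mp
        rw [hx]; rfl
    have h2 := vdm htm β hβ (Fin.snoc (fun k => (x.1 k : K)) (x.2 • ψ)) (by
      intro j
      rw [Fin.sum_univ_castSucc]
      simp only [Fin.snoc_castSucc, Fin.snoc_last, Fin.val_castSucc, Fin.val_last]
      rw [← hw, h1])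
    have h3 : x.1 = 0 := by
      funext k
      have := h2 (Fin.castSucc k)
      rw [Fin.snoc_castSucc] at this
      exact Subtype.ext this
    have h4 : x.2 = 0 := by
      have := h2 (Fin.last t)
      rw [Fin.snoc_last] at this
      exact (smul_eq_zero.mp this).resolve_right hψ0
    exact Prod.ext h3 h4
  -- weight
  have hwt : ∀ c : Fin (N * m) → F, hammingWt c =
      (Finset.univ.filter (fun p : Fin N × Fin m => c (finProdFinEquiv p) ≠ 0)).card := by
    intro c
    unfold hammingWt
    rw [← Finset.card_map finProdFinEquiv.toEmbedding]
    congr 1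
    ext n
    simp only [Finset.mem_filter, Finset.mem_univ, true_and, Finset.mem_map, Equiv.coe_toEmbedding]
    constructor
    · intro h
      exact ⟨finProdFinEquiv.symm n, by rwa [Equiv.apply_symm_apply], Equiv.apply_symm_apply _ _⟩
    · rintro ⟨p, h, rfl⟩
      exact h
  have hwt2 : ∀ c : Fin (N * m) → F, hammingWt c +
      (Finset.univ.filter (fun p : Fin N × Fin m => c (finProdFinEquiv p) = 0)).card = N * m := by
    intro c
    rw [hwt, add_comm, Finset.card_filter_add_card_filter_not]
    simp
  have hmt : N * (m - t) + N * t = N * m := by rw [← mul_add]; congr 1; omega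
  refine ⟨LinearMap.range L, ?_, ⟨?_, ?_⟩, ?_, ?_⟩
  · rw [LinearMap.finrank_range_of_inj hinj, Module.finrank_prod, Module.finrank_pi_fintype]
    simp [hU, mul_comm]
  · rintro c ⟨x, rfl⟩ hc
    set f : K := (∑ k : Fin t, (x.1 k : K) * G ^ (k : ℕ) * ψ ^ (t - 1 - k)) + x.2 • G ^ t with hf
    have hfe : ∀ p, L x (finProdFinEquiv p) = e p f := by
      intro p
      rw [hL, hw, hf, map_add, map_add, map_sum, map_sum, mul_add, Finset.mul_sum]
      congr 1
      · apply Finset.sum_congr rfl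
        intro k _
        rw [map_smul, map_mul, map_mul, map_pow, map_pow, hG, smul_eq_mul, mul_pow]
        have : e p ψ ^ (t - 1) = e p ψ ^ (k : ℕ) * e p ψ ^ (t - 1 - k) := by
          rw [← pow_add]; congr 1; omega
        rw [this]; ring
      · rw [map_smul, map_smul, map_smul, map_pow, hG, smul_eq_mul, smul_eq_mul, smul_eq_mul, mul_pow]
        have : e p ψ ^ t = e p ψ ^ (t - 1) * e p ψ := by
          rw [← pow_succ]; congr 1; omega
        rw [this]; ring
    have hfS : f ∈ S := S.add_mem (S.sum_mem fun k _ => hS _ (x.1 k).2 _ k.2) (S.smul_mem _ hGS)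
    have hf0 : f ≠ 0 := by
      intro h0
      apply hc
      funext n
      have := hfe (finProdFinEquiv.symm n)
      rw [h0, map_zero, Equiv.apply_symm_apply] at this
      exact this
    have h1 := hwt2 (L x)
    have h2 := hcnt f hfS hf0
    simp only [hfe] at h1
    omega
  · let p : F[X] := ∏ i : Fin t, (X - C (β (Fin.castLE htm.le i)))
    have hpm : p.Monic := monic_prod_of_monic _ _ (fun i _ => monic_X_sub_C _)
    have hpd : p.natDegree = t := by
      rw [natDegree_prod_of_monic _ _ (fun i _ => monic_X_sub_C _)]; simp
    let x : (Fin t → U) × F := (fun k => p.coeff k • ⟨ψ, hψU⟩, 1)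
    have hwx : ∀ j, w j x = p.eval (β j) • ψ := by
      intro j
      have hct : p.coeff t = 1 := by
        have := hpm.coeff_natDegree
        rwa [hpd] at this
      rw [hw, eval_eq_sum_range, hpd, Finset.sum_range_succ, hct, add_smul, Finset.sum_smul, Finset.sum_range]
      congr 1
      · apply Finset.sum_congr rfl
        intro k _
        simp [x, smul_smul, mul_comm]
      · simp [x]
    have hz : ∀ q : Fin N × Fin m, L x (finProdFinEquiv q) = 0 ↔ (q.2 : ℕ) < t := by
      intro q
      rw [hL0, hwx, map_smul, smul_eq_mul, mul_eq_zero_iff_right (hψ q), eval_prod, Finset.prod_eq_zero_iff]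
      simp only [Finset.mem_univ, true_and, eval_sub, eval_X, eval_C, sub_eq_zero]
      constructor
      · rintro ⟨i, hi⟩
        rw [hβ hi]; exact i.2
      · intro h
        exact ⟨⟨q.2, h⟩, rfl⟩
    refine ⟨L x, ⟨x, rfl⟩, ?_, ?_⟩
    · intro h
      have := (hz (⟨0, hN1⟩, ⟨t, htm⟩)).mp (by rw [h]; rfl)
      simp at this
    · have h1 := hwt2 (L x)
      simp only [hz] at h1
      have h2 : (Finset.univ.filter (fun q : Fin N × Fin m => (q.2 : ℕ) < t)).card = N * t := by
        have : (Finset.univ.filter (fun q : Fin N × Fin m => (q.2 : ℕ) < t)) =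
            (Finset.univ : Finset (Fin N)) ×ˢ (Finset.univ.filter (fun j : Fin m => (j : ℕ) < t)) := by
          ext q; simp
        rw [this, Finset.card_product, Finset.card_univ, Fintype.card_fin, Fin.card_filter_val_lt,
          min_eq_right htm.le]
      omega
  · intro n
    obtain ⟨⟨i, j⟩, rfl⟩ := finProdFinEquiv.surjective n
    let φ : Fin N ↪ Fin (N * m) := ⟨fun i => finProdFinEquiv (i, j), fun a b h => by simpa using h⟩
    refine ⟨Finset.univ.map φ, ?_, ?_, ?_⟩
    · rw [Finset.mem_map]; exact ⟨i, Finset.mem_univ _, rfl⟩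
    · rw [Finset.card_map, Finset.card_univ, Fintype.card_fin]; omega
    · rintro c ⟨x, rfl⟩ ⟨n, hn, hne⟩
      rw [Finset.filter_map, Finset.card_map]
      by_contra hlt
      rw [not_le] at hlt
      have h0 := hloc j (w j x) (hwU j x) (by
        refine lt_of_le_of_lt (Finset.card_le_card ?_) hlt
        intro i
        simp only [Finset.mem_filter, Finset.mem_univ, true_and, Function.comp]
        exact fun hi => fun h' => hi ((hL0 x (i, j)).mp h'))
      rw [Finset.mem_map] at hn
      obtain ⟨i', _, rfl⟩ := hn
      apply hne
      apply (hL0 x (i', j)).mpr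
      show e (i', j) (w j x) = 0
      rw [h0, map_zero]
  · unfold SingletonOptimal
    have h1 : (r * t + 1 + r - 1) / r = t + 1 := by
      have : r * t + 1 + r - 1 = r * (t + 1) := by rw [mul_add]; omega
      rw [this, Nat.mul_div_cancel_left _ hr]
    rw [h1]
    have h2 : (r : ℤ) + δ = N + 1 := by exact_mod_cast hN
    have h3 : (N : ℤ) * ((m - t : ℕ) : ℤ) + N * t = N * m := by exact_mod_cast hmt
    push_cast
    have h4 : (δ : ℤ) = N + 1 - r := by linarith
    rw [h4]
    push_cast at h3
    linear_combination h3

end LRC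


namespace LRC

theorem block {A : Type*} [AddCommGroup A] [DecidableEq A] (σ : A →+ A)
    (hσ : ∀ a, a + σ a + σ (σ a) = 0) (H : AddSubgroup A) (hH : Stab σ H)
    (HF : Finset A) (hHF : ∀ P, P ∈ HF ↔ P ∈ H) (h3 : ∀ a, a + a + a ∈ H → a ∈ H)
    (P : A) (hP : P + P ∉ H) :
    ∃ B : Finset A, B.card = 3 * HF.card ∧ (∀ Q ∈ B, Q ∉ H) ∧ (∀ Q ∈ B, ∀ R ∈ B, Q + R ≠ 0) ∧
      (∀ Q ∈ B, ∃ τ ∈ H, Q = P + τ ∨ Q = σ P + τ ∨ Q = σ (σ P) + τ) ∧ ∑ Q ∈ B, Q = 0 := by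
  have hs3 : ∀ a, σ (σ (σ a)) = a := by
    intro a
    have h1 := hσ a
    have h2 := hσ (σ a)
    have : σ (σ (σ a)) - a = (σ a + σ (σ a) + σ (σ (σ a))) - (a + σ a + σ (σ a)) := by abel
    rw [h1, h2, sub_zero] at this
    exact sub_eq_zero.1 this
  have hback : ∀ a, σ a ∈ H → a ∈ H := fun a ha => by
    rw [← hs3 a]; exact hH _ (hH _ ha)
  have hsum : P + σ P + σ (σ P) = 0 := hσ P
  have hP0 : P ∉ H := fun h => hP (H.add_mem h h)
  have hP1 : σ P ∉ H := fun h => hP0 (hback _ h)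
  have hP2 : σ (σ P) ∉ H := fun h => hP1 (hback _ h)
  have hQ1 : σ P + σ P ∉ H := fun h => hP (hback _ (by rwa [map_add]))
  have hQ2 : σ (σ P) + σ (σ P) ∉ H := fun h => hQ1 (hback _ (by rwa [map_add]))
  have hD1 : P - σ P ∉ H := by
    intro h
    apply hP0
    apply h3
    have h2 := hH _ h
    have : P + P + P = (P - σ P) + (P - σ P) + σ (P - σ P) + (P + σ P + σ (σ P)) := by
      rw [map_sub]; abel
    rw [this, hsum, add_zero]
    exact H.add_mem (H.add_mem h h) h2
  have hD2 : σ P - σ (σ P) ∉ H := fun h => hD1 (hback _ (by rwa [map_sub]))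
  have hD3 : P - σ (σ P) ∉ H := fun h => hD1 (by
    have := hH _ h
    rw [map_sub, hs3] at this
    rw [← neg_sub]; exact H.neg_mem this)
  have hS1 : P + σ P ∉ H := fun h => hP2 (by
    have : σ (σ P) = - (P + σ P) + (P + σ P + σ (σ P)) := by abel
    rw [this, hsum, add_zero]; exact H.neg_mem h)
  have hS2 : σ P + σ (σ P) ∉ H := fun h => hS1 (hback _ (by rwa [map_add]))
  have hS3 : P + σ (σ P) ∉ H := fun h => hP1 (by
    have : σ P = - (P + σ (σ P)) + (P + σ P + σ (σ P)) := by abel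
    rw [this, hsum, add_zero]; exact H.neg_mem h)
  have hS1' : σ P + P ∉ H := by rwa [add_comm]
  have hS2' : σ (σ P) + σ P ∉ H := by rwa [add_comm]
  have hS3' : σ (σ P) + P ∉ H := by rwa [add_comm]
  let I : A → Finset A := fun R => HF.map (addLeftEmbedding R)
  have hI : ∀ R Q, Q ∈ I R ↔ ∃ τ ∈ H, Q = R + τ := by
    intro R Q
    simp only [I, Finset.mem_map, addLeftEmbedding_apply, hHF]
    exact exists_congr fun a => and_congr_right fun _ => eq_comm
  have hdis : ∀ R S, R - S ∉ H → Disjoint (I R) (I S) := by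
    intro R S h
    rw [Finset.disjoint_left]
    intro Q h1 h2
    rw [hI] at h1 h2
    obtain ⟨a, ha, rfl⟩ := h1
    obtain ⟨b, hb, e⟩ := h2
    apply h
    have : R - S = b - a := by
      rw [sub_eq_sub_iff_add_eq_add, e]; abel
    rw [this]; exact H.sub_mem hb ha
  have hIs : ∀ R, ∑ Q ∈ I R, Q = HF.card • R + ∑ τ ∈ HF, τ := by
    intro R
    simp only [I, Finset.sum_map, addLeftEmbedding_apply]
    rw [Finset.sum_add_distrib, Finset.sum_const]
  have d1 := hdis _ _ hD1
  have d2 := hdis _ _ hD2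
  have d3 := hdis _ _ hD3
  have d4 : Disjoint (I P ∪ I (σ P)) (I (σ (σ P))) := Finset.disjoint_union_left.2 ⟨d3, d2⟩
  have hmem : ∀ Q ∈ I P ∪ I (σ P) ∪ I (σ (σ P)), ∃ τ ∈ H, Q = P + τ ∨ Q = σ P + τ ∨ Q = σ (σ P) + τ := by
    intro Q hQ
    simp only [Finset.mem_union, hI] at hQ
    rcases hQ with (⟨τ, hτ, e⟩ | ⟨τ, hτ, e⟩) | ⟨τ, hτ, e⟩
    · exact ⟨τ, hτ, Or.inl e⟩
    · exact ⟨τ, hτ, Or.inr (Or.inl e)⟩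
    · exact ⟨τ, hτ, Or.inr (Or.inr e)⟩
  have hSg : σ (∑ τ ∈ HF, τ) = ∑ τ ∈ HF, τ := by
    rw [map_sum]
    apply Finset.sum_bij' (fun a _ => σ a) (fun a _ => σ (σ a))
    · intro a ha; rw [hHF] at *; exact hH _ ha
    · intro a ha; rw [hHF] at *; exact hH _ (hH _ ha)
    · intro a _; exact hs3 a
    · intro a _; exact hs3 a
    · intro a _; rfl
  have key : ∀ R S τ τ', τ ∈ H → τ' ∈ H → R + S ∉ H → (R + τ) + (S + τ') ≠ 0 := by
    intro R S τ τ' h1 h2 h h0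
    apply h
    have : R + S = (R + τ) + (S + τ') - (τ + τ') := by abel
    rw [this, h0, zero_sub]; exact H.neg_mem (H.add_mem h1 h2)
  refine ⟨I P ∪ I (σ P) ∪ I (σ (σ P)), ?_, ?_, ?_, hmem, ?_⟩
  · rw [Finset.card_union_of_disjoint d4, Finset.card_union_of_disjoint d1]
    simp only [I, Finset.card_map]; ring
  · intro Q hQ
    obtain ⟨τ, hτ, rfl | rfl | rfl⟩ := hmem Q hQ <;> rwa [H.add_mem_cancel_right hτ]
  · intro Q hQ R hR
    obtain ⟨τ, hτ, rfl | rfl | rfl⟩ := hmem Q hQ <;>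
    obtain ⟨τ', hτ', rfl | rfl | rfl⟩ := hmem R hR <;>
    exact key _ _ _ _ hτ hτ' (by assumption)
  · rw [Finset.sum_union d4, Finset.sum_union d1, hIs, hIs, hIs]
    have h1 : ∑ τ ∈ HF, τ + ∑ τ ∈ HF, τ + ∑ τ ∈ HF, τ = 0 := by
      have := hσ (∑ τ ∈ HF, τ)
      rwa [hSg, hSg] at this
    have : HF.card • P + ∑ τ ∈ HF, τ + (HF.card • σ P + ∑ τ ∈ HF, τ) + (HF.card • σ (σ P) + ∑ τ ∈ HF, τ)
      = HF.card • (P + σ P + σ (σ P)) + (∑ τ ∈ HF, τ + ∑ τ ∈ HF, τ + ∑ τ ∈ HF, τ) := by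
      rw [smul_add, smul_add]; abel
    rw [this, hsum, h1]; simp

end LRC


namespace LRC

set_option linter.unusedSectionVars false

open WeierstrassCurve WeierstrassCurve.Affine Polynomial

section
variable {F : Type*} [Field F] [DecidableEq F] {g : F} [CharP F 3]

lemma hloc1 (B : Finset (Wg g).Point) (h : ℕ) (hh : 1 ≤ h) (hB : B.card = 3 * h)
    (hB0 : ∀ Q ∈ B, Q ≠ 0) (hBs : ∀ Q ∈ B, ∀ R ∈ B, Q + R ≠ 0) (hsum : ∑ Q ∈ B, Q = 0)
    (u : (Wg g).CoordinateRing) (hu : u ∈ Rk g (3 * h - 2))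
    (hc : (B.filter (fun Q => ev Q u ≠ 0)).card < 3) : u = 0 := by
  by_contra hu0
  have hsp := Finset.card_filter_add_card_filter_not (s := B) (fun Q => ev Q u = 0)
  have h1 := zero_count hu hu0 (B.filter (fun Q => ev Q u = 0))
    (fun P hP => hB0 P (Finset.mem_filter.1 hP).1) (fun P hP => (Finset.mem_filter.1 hP).2)
  have hc' : (B.filter (fun Q => ¬ ev Q u = 0)).card < 3 := hc
  have h2 := sum_zero hu hu0 (B.filter (fun Q => ev Q u = 0))
    (fun P hP => hB0 P (Finset.mem_filter.1 hP).1) (fun P hP => (Finset.mem_filter.1 hP).2) (by omega)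
  have h3 := Finset.sum_filter_add_sum_filter_not B (fun Q => ev Q u = 0) (fun Q => Q)
  rw [h2, hsum, zero_add] at h3
  have h4 : (B.filter (fun Q => ¬ ev Q u = 0)).card = 2 := by omega
  obtain ⟨a, b, hab, e⟩ := Finset.card_eq_two.1 h4
  rw [e, Finset.sum_pair hab] at h3
  have ha : a ∈ B.filter (fun Q => ¬ ev Q u = 0) := by rw [e]; simp
  have hb : b ∈ B.filter (fun Q => ¬ ev Q u = 0) := by rw [e]; simp
  exact hBs a (Finset.mem_filter.1 ha).1 b (Finset.mem_filter.1 hb).1 h3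

/-- the coordinate function -/
noncomputable def xe (g : F) : (Wg g).CoordinateRing := el g (X, 0)

lemma xe_mem : xe g ∈ Rk g 2 := by
  unfold xe
  rw [mem_Rk_el]
  constructor
  · rw [degree_X]; norm_num
  · rw [degree_zero]; exact WithBot.bot_lt_coe _

lemma ev_xe (P : (Wg g).Point) : ev P (xe g) = xc P := by
  unfold xe; rw [ev_el]; simp

lemma hloc2 (B : Finset (Wg g).Point) (h : ℕ) (hh : 1 ≤ h) (hB : B.card = 3 * h)
    (hB0 : ∀ Q ∈ B, Q ≠ 0) (hBs : ∀ Q ∈ B, ∀ R ∈ B, Q + R ≠ 0)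
    (ψ : (Wg g).CoordinateRing) (hψ : ∀ Q ∈ B, ev Q ψ ≠ 0) (a b : F)
    (hc : (B.filter (fun Q => ev Q (a • ψ + b • (xe g * ψ)) ≠ 0)).card < 3 * h - 1) : a = 0 ∧ b = 0 := by
  have hsp := Finset.card_filter_add_card_filter_not (s := B) (fun Q => ev Q (a • ψ + b • (xe g * ψ)) = 0)
  have hc' : (B.filter (fun Q => ¬ ev Q (a • ψ + b • (xe g * ψ)) = 0)).card < 3 * h - 1 := hc
  have h1 : 1 < (B.filter (fun Q => ev Q (a • ψ + b • (xe g * ψ)) = 0)).card := by omega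
  obtain ⟨P, hP, Q, hQ, hPQ⟩ := Finset.one_lt_card.1 h1
  have key : ∀ R ∈ B.filter (fun Q => ev Q (a • ψ + b • (xe g * ψ)) = 0), a + b * xc R = 0 := by
    intro R hR
    obtain ⟨hR, h0⟩ := Finset.mem_filter.1 hR
    simp only [map_add, map_smul, map_mul, ev_xe, smul_eq_mul] at h0
    have : (a + b * xc R) * ev R ψ = 0 := by linear_combination h0
    exact (mul_eq_zero.1 this).resolve_right (hψ R hR)
  have e1 := key P hP
  have e2 := key Q hQ
  have hPB := (Finset.mem_filter.1 hP).1
  have hQB := (Finset.mem_filter.1 hQ).1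
  have hx : xc P ≠ xc Q := by
    intro h
    rcases xc_inj (hB0 P hPB) (hB0 Q hQB) h with h | h
    · exact hPQ h
    · exact hBs P hPB Q hQB (by rw [h]; simp)
  have : b * (xc P - xc Q) = 0 := by linear_combination e1 - e2
  have hb := (mul_eq_zero.1 this).resolve_right (sub_ne_zero.2 hx)
  subst hb
  exact ⟨by simpa using e1, rfl⟩

theorem assembly (hg : g ≠ 0) (H : AddSubgroup (Wg g).Point) (hH : Stab sig H)
    (HF : Finset (Wg g).Point) (hHF : ∀ P, P ∈ HF ↔ P ∈ H) (h3 : ∀ a, a + a + a ∈ H → a ∈ H)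
    (h : ℕ) (hc : HF.card = h) (hh : 1 ≤ h)
    {m t : ℕ} (ht : 1 ≤ t) (htm : t < m) (Pj : Fin m → (Wg g).Point) (hPj : ∀ j, Pj j + Pj j ∉ H)
    (hinj : Function.Injective (fun j => zf HF (Pj j))) :
    ExistsOptimalLRC F (3 * h * m) ((3 * h - 2) * t + 1) (3 * h * (m - t)) (3 * h - 2) 3 ∧
    ExistsOptimalLRC F (3 * h * m) (2 * t + 1) (3 * h * (m - t)) 2 (3 * h - 1) := by
  obtain ⟨ψ, G, hψ, hG, hev, hne⟩ := exists_psi hg H hH HF hHF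
  rw [hc] at hψ hG
  choose B hBc hBH hBs hBm hBsum using fun j => block sig (sig_rel hg) H hH HF hHF h3 (Pj j) (hPj j)
  rw [hc] at hBc
  have hB0 : ∀ j, ∀ Q ∈ B j, Q ≠ 0 := fun j Q hQ h0 => hBH j Q hQ (h0 ▸ H.zero_mem)
  let E : ∀ j, Fin (3 * h) ≃ B j := fun j => ((B j).equivFinOfCardEq (hBc j)).symm
  let pt : Fin (3 * h) × Fin m → (Wg g).Point := fun p => (E p.2 p.1).1
  have hpt : ∀ p, pt p ∈ B p.2 := fun p => (E p.2 p.1).2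
  have hz : ∀ j, ∀ Q ∈ B j, zf HF Q = zf HF (Pj j) := by
    intro j Q hQ
    obtain ⟨τ, hτ, rfl | rfl | rfl⟩ := hBm j Q hQ
    · rw [zf_add H HF hHF _ hτ]
    · rw [zf_add H HF hHF _ hτ, zf_sig H hH HF hHF]
    · rw [zf_add H HF hHF _ hτ, zf_sig H hH HF hHF, zf_sig H hH HF hHF]
  have hptinj : Function.Injective pt := by
    rintro ⟨i, j⟩ ⟨i', j'⟩ e
    have h1 := hz _ _ (hpt (i, j))
    have h2 := hz _ _ (hpt (i', j'))
    rw [e, h2] at h1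
    have hj : j' = j := hinj h1
    subst hj
    have : i = i' := (E j').injective (Subtype.ext e)
    rw [this]
  have hcount : ∀ j (p : (Wg g).Point → Prop) [DecidablePred p],
      (Finset.univ.filter (fun i => p (pt (i, j)))).card = ((B j).filter p).card := by
    intro j p _
    apply Finset.card_bij (fun i _ => pt (i, j))
    · intro i hi
      simp only [Finset.mem_filter, Finset.mem_univ, true_and] at hi ⊢
      exact ⟨hpt (i, j), hi⟩
    · intro a _ b _ e
      exact congrArg Prod.fst (hptinj e)
    · intro Q hQ
      obtain ⟨hQ, hp⟩ := Finset.mem_filter.1 hQ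
      refine ⟨(E j).symm ⟨Q, hQ⟩, ?_, ?_⟩
      · simpa [pt] using hp
      · simp [pt]
  have hptH : ∀ p, pt p ∉ H := fun p => hBH _ _ (hpt p)
  have hψ0 : ∀ p, ev (pt p) ψ ≠ 0 := fun p => (hev _ (hptH p)).1
  have hGp : ∀ p, ev (pt p) G = zf HF (Pj p.2) * ev (pt p) ψ := fun p => by
    rw [(hev _ (hptH p)).2, hz _ _ (hpt p)]
  have hGS : G ^ t ∈ Rk g (3 * h * t) := Rk_pow hG t
  have hS : ∀ u ∈ Rk g (3 * h), ∀ i < t, u * G ^ i * ψ ^ (t - 1 - i) ∈ Rk g (3 * h * t) := by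
    intro u hu i hi
    refine Rk_mono ?_ (Rk_mul (Rk_mul hu (Rk_pow hG i))
      (Rk_pow (Rk_mono (show 3 * h - 3 ≤ 3 * h by omega) hψ) (t - 1 - i)))
    obtain ⟨c, rfl⟩ := Nat.exists_eq_add_of_lt hi
    have : i + c + 1 - 1 - i = c := by omega
    rw [this]
    apply le_of_eq; ring
  have hcnt : ∀ f ∈ Rk g (3 * h * t), f ≠ 0 →
      (Finset.univ.filter (fun p => ev (pt p) f = 0)).card ≤ 3 * h * t := by
    intro f hf hf0
    rw [← Finset.card_image_of_injective _ hptinj]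
    apply zero_count hf hf0
    · intro P hP
      obtain ⟨p, -, rfl⟩ := Finset.mem_image.1 hP
      exact hB0 _ _ (hpt p)
    · intro P hP
      obtain ⟨p, hp, rfl⟩ := Finset.mem_image.1 hP
      exact (Finset.mem_filter.1 hp).2
  constructor
  · apply coding (N := 3 * h) (K := (Wg g).CoordinateRing) (by omega) (by omega) (by omega) ht htm
      (fun p => ev (pt p)) (fun j => zf HF (Pj j)) hinj (Rk g (3 * h - 2))
      (finrank_Rk (by omega)) G ψ (Rk_mono (by omega) hψ) hψ0 hGp ?_ (Rk g (3 * h * t))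
      (fun u hu => hS u (Rk_mono (by omega) hu)) hGS hcnt
    intro j u hu hlt
    rw [hcount j (fun Q => ev Q u ≠ 0)] at hlt
    exact hloc1 (B j) h hh (hBc j) (hB0 j) (hBs j) (hBsum j) u hu hlt
  · have hj0 : Nonempty (Fin m) := ⟨⟨0, by omega⟩⟩
    obtain ⟨j0⟩ := hj0
    have hloc : ∀ (j : Fin m) (a b : F), (Finset.univ.filter (fun i => ev (pt (i, j)) (a • ψ + b • (xe g * ψ)) ≠ 0)).card < 3 * h - 1 →
        a = 0 ∧ b = 0 := by
      intro j a b hlt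
      rw [hcount j (fun Q => ev Q (a • ψ + b • (xe g * ψ)) ≠ 0)] at hlt
      exact hloc2 (B j) h hh (hBc j) (hB0 j) (hBs j) ψ (fun Q hQ => (hev _ (hBH j Q hQ)).1) a b hlt
    have hli : LinearIndependent F ![ψ, xe g * ψ] := by
      rw [LinearIndependent.pair_iff]
      intro a b hab
      apply hloc j0
      rw [hab]
      simp; omega
    have hspan : ∀ u, u ∈ Submodule.span F (Set.range ![ψ, xe g * ψ]) ↔ ∃ a b : F, a • ψ + b • (xe g * ψ) = u := by
      intro u
      rw [Matrix.range_cons, Matrix.range_cons, Matrix.range_empty, Set.union_empty, Set.singleton_union,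
        Submodule.mem_span_pair]
    have hfd : FiniteDimensional F (Submodule.span F (Set.range ![ψ, xe g * ψ])) :=
      FiniteDimensional.span_of_finite F (Set.finite_range _)
    apply coding (N := 3 * h) (K := (Wg g).CoordinateRing) (by omega) (by omega) (by omega) ht htm
      (fun p => ev (pt p)) (fun j => zf HF (Pj j)) hinj (Submodule.span F (Set.range ![ψ, xe g * ψ]))
      (by rw [finrank_span_eq_card hli]; simp) G ψ ((hspan _).2 ⟨1, 0, by simp⟩) hψ0 hGp ?_ (Rk g (3 * h * t))
      ?_ hGS hcnt
    · intro j u hu hlt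
      obtain ⟨a, b, rfl⟩ := (hspan u).1 hu
      obtain ⟨rfl, rfl⟩ := hloc j a b hlt
      simp
    · intro u hu
      obtain ⟨a, b, rfl⟩ := (hspan u).1 hu
      apply hS
      apply Submodule.add_mem
      · exact Submodule.smul_mem _ _ (Rk_mono (by omega) hψ)
      · exact Submodule.smul_mem _ _ (Rk_mono (by omega) (Rk_mul xe_mem hψ))

lemma tors_count (HF : Finset (Wg g).Point) (U : Finset (Wg g).Point) (hU : ∀ P ∈ U, P + P ∈ HF) :
    U.card ≤ 4 * HF.card := by
  apply Finset.card_le_mul_card_image_of_maps_to (f := fun P => P + P) hU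
  intro b _
  by_cases hne : (U.filter (fun P => P + P = b)).Nonempty
  swap
  · rw [Finset.not_nonempty_iff_eq_empty] at hne; rw [hne]; simp
  obtain ⟨Q, hQ⟩ := hne
  have hQ := (Finset.mem_filter.1 hQ).2
  let T : Finset (Option F) := {none, some 0, some g, some (-g)}
  have hT : T.card ≤ 4 := Finset.card_le_four
  refine le_trans ?_ hT
  apply Finset.card_le_card_of_injOn (fun P => if P - Q = 0 then none else some (xc (P - Q)))
  · intro P hP
    have hP := (Finset.mem_filter.1 hP).2
    have hn : P - Q = -(P - Q) := by
      rw [neg_sub, sub_eq_sub_iff_add_eq_add, hP, hQ]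
    by_cases h0 : P - Q = 0
    · simp [h0, T]
    · have := two_tors (P - Q) (yc_of_neg_eq hn) h0
      simp [h0, T]
      tauto
  · intro P hP P' hP' e
    have hP := (Finset.mem_filter.1 hP).2
    have hP' := (Finset.mem_filter.1 hP').2
    have hn : P - Q = -(P - Q) := by
      rw [neg_sub, sub_eq_sub_iff_add_eq_add, hP, hQ]
    have hn' : P' - Q = -(P' - Q) := by
      rw [neg_sub, sub_eq_sub_iff_add_eq_add, hP', hQ]
    have : P - Q = P' - Q := by
      by_cases h0 : P - Q = 0 <;> by_cases h0' : P' - Q = 0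
      · rw [h0, h0']
      · simp [h0, h0'] at e
      · simp [h0, h0'] at e
      · simp [h0, h0'] at e
        exact pt_ext h0 h0' e (by rw [yc_of_neg_eq hn, yc_of_neg_eq hn'])
    simpa using this

lemma exists_reps (hg : g ≠ 0) [Fintype (Wg g).Point] (H : AddSubgroup (Wg g).Point) (hH : Stab sig H)
    (HF : Finset (Wg g).Point) (hHF : ∀ P, P ∈ HF ↔ P ∈ H)
    (h m : ℕ) (hc : HF.card = h) (hh : 1 ≤ h) (hm : 3 * h * m + 4 * h ≤ Fintype.card (Wg g).Point) :
    ∃ Pj : Fin m → (Wg g).Point, (∀ j, Pj j + Pj j ∉ H) ∧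
      Function.Injective (fun j => zf HF (Pj j)) := by
  obtain ⟨ψ, G, hψ, hG, hev, hne⟩ := exists_psi hg H hH HF hHF
  rw [hc] at hψ hG
  let U : Finset (Wg g).Point := Finset.univ.filter (fun P => ¬ P + P ∈ HF)
  have h1 := Finset.card_filter_add_card_filter_not (s := (Finset.univ : Finset (Wg g).Point)) (fun P => P + P ∈ HF)
  have h2 := tors_count HF (Finset.univ.filter (fun P => P + P ∈ HF)) (fun P hP => (Finset.mem_filter.1 hP).2)
  rw [hc] at h2
  have hUm : ∀ P ∈ U, P + P ∉ H := fun P hP => by rw [← hHF]; exact (Finset.mem_filter.1 hP).2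
  have h3 : U.card ≤ 3 * h * (U.image (zf HF)).card := by
    apply Finset.card_le_mul_card_image
    intro β _
    have hmem : G - β • ψ ∈ Rk g (3 * h) :=
      Submodule.sub_mem _ hG (Submodule.smul_mem _ _ (Rk_mono (by omega) hψ))
    apply zero_count hmem (hne β)
    · intro P hP h0
      apply hUm P (Finset.mem_filter.1 hP).1
      rw [h0, add_zero]; exact H.zero_mem
    · intro P hP
      obtain ⟨hP, e⟩ := Finset.mem_filter.1 hP
      have hPH : P ∉ H := fun hh => hUm P hP (H.add_mem hh hh)
      rw [map_sub, map_smul, (hev P hPH).2, e]; simp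
  have h4 : m ≤ (U.image (zf HF)).card := by
    have h5 : 3 * h * m ≤ U.card := by
      rw [Finset.card_univ] at h1
      change _ + U.card = _ at h1
      omega
    exact Nat.le_of_mul_le_mul_left (h5.trans h3) (by omega)
  obtain ⟨V, hV, hVc⟩ := Finset.exists_subset_card_eq h4
  let E : Fin m ≃ V := (V.equivFinOfCardEq hVc).symm
  have hE : ∀ j, ∃ P ∈ U, zf HF P = (E j).1 := fun j => Finset.mem_image.1 (hV (E j).2)
  choose Pj hPU hPz using hE
  refine ⟨Pj, fun j => hUm _ (hPU j), ?_⟩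
  intro j j' e
  simp only [hPz] at e
  exact E.injective (Subtype.ext e)

end

end LRC


namespace LRC

lemma arith (s h₀ h m k : ℕ) (hh₀ : 0 < h₀) (hk : 3 ^ s + 1 = h₀ * k) (hs : 0 < s) (hh : h = h₀ ^ 2)
    (hm : (m : ℤ) ≤ 2 * ⌈(((3 ^ (2 * s) : ℕ) : ℚ) + 2 * 3 ^ s + 1 - 8 * (h : ℚ)) / (6 * (h : ℚ))⌉) :
    3 * h * m + 4 * h ≤ (3 ^ s + 1) ^ 2 := by
  have e : (((3 ^ (2 * s) : ℕ) : ℚ) + 2 * 3 ^ s + 1 - 8 * (h : ℚ)) / (6 * (h : ℚ)) = ((k : ℚ) ^ 2 - 8) / 6 := by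
    have h1 : (3 : ℚ) ^ s + 1 = h₀ * k := by exact_mod_cast hk
    have h0 : (h₀ : ℚ) ≠ 0 := by positivity
    have h2 : (((3 ^ (2 * s) : ℕ) : ℚ) + 2 * 3 ^ s + 1) = (h₀ * k) ^ 2 := by
      rw [← h1]; push_cast; ring
    rw [h2, hh]; push_cast; field_simp
  rw [e] at hm
  have h3 : ¬ 3 ∣ k := by
    intro hd
    have h4 : 3 ∣ 3 ^ s + 1 := by rw [hk]; exact hd.mul_left _
    have h5 : 3 ∣ 3 ^ s := dvd_pow_self 3 (by omega)
    omega
  have h6 : k ^ 2 % 6 = 1 ∨ k ^ 2 % 6 = 4 := by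
    have : k % 6 = 1 ∨ k % 6 = 2 ∨ k % 6 = 4 ∨ k % 6 = 5 := by omega
    rcases this with h | h | h | h <;> simp [Nat.pow_mod, h]
  have key : 3 * m + 4 ≤ k ^ 2 := by
    have h7 := Nat.div_add_mod (k ^ 2) 6
    set a := k ^ 2 / 6
    rcases h6 with h6 | h6
    · rw [h6] at h7
      have hq : (k : ℚ) ^ 2 = 6 * a + 1 := by exact_mod_cast h7.symm
      have : ⌈((k : ℚ) ^ 2 - 8) / 6⌉ ≤ (a : ℤ) - 1 := by
        rw [Int.ceil_le, hq]; push_cast; linarith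
      omega
    · rw [h6] at h7
      have hq : (k : ℚ) ^ 2 = 6 * a + 4 := by exact_mod_cast h7.symm
      have : ⌈((k : ℚ) ^ 2 - 8) / 6⌉ ≤ (a : ℤ) := by
        rw [Int.ceil_le, hq]; push_cast; linarith
      omega
  rw [hk, mul_pow, ← hh]
  calc 3 * h * m + 4 * h = h * (3 * m + 4) := by ring
    _ ≤ _ := Nat.mul_le_mul_left _ key

end LRC

theorem stmt_4 (s : ℕ) (hs : 0 < s) (q : ℕ) (hq : q = 3 ^ (2 * s))
    (h₀ : ℕ) (hh₀ : 0 < h₀) (hdvd : h₀ ∣ 3 ^ s + 1) (h : ℕ) (hh : h = h₀ ^ 2)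
    (t m : ℕ) (ht : 1 ≤ t) (htm : t < m)
    (hm : (m : ℤ) ≤ 2 * ⌈((q : ℚ) + 2 * 3 ^ s + 1 - 8 * (h : ℚ)) / (6 * (h : ℚ))⌉)
    (F : Type*) [Field F] [Fintype F] [DecidableEq F] (hF : Fintype.card F = q) :
    ExistsOptimalLRC F (3 * h * m) ((3 * h - 2) * t + 1) (3 * h * (m - t)) (3 * h - 2) 3 ∧
    ExistsOptimalLRC F (3 * h * m) (2 * t + 1) (3 * h * (m - t)) 2 (3 * h - 1) := by
  subst hq
  haveI : Fact (Nat.Prime 3) := ⟨Nat.prime_three⟩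
  haveI : CharP F 3 := charP_of_card_eq_prime_pow hF
  obtain ⟨g, hg, hcg⟩ := LRC.exists_curve F s hF
  obtain ⟨hfin, hcard⟩ := LRC.card_pt (F := F) hg
  rw [hcg] at hcard
  have hcard' : Nat.card (LRC.Wg g).Point = (3 ^ s + 1) ^ 2 := by rw [hcard]; ring
  obtain ⟨H, hH, hHc⟩ := LRC.exists_stab h₀ (LRC.sig (g := g)) (LRC.sig_rel hg) (3 ^ s + 1) hcard' hdvd
  obtain ⟨k, hk⟩ := hdvd
  have har := LRC.arith s h₀ h m k hh₀ hk hs hh hm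
  haveI := Fintype.ofFinite (LRC.Wg g).Point
  let HF : Finset (LRC.Wg g).Point := (Set.toFinite (H : Set (LRC.Wg g).Point)).toFinset
  have hHF : ∀ P, P ∈ HF ↔ P ∈ H := fun P => by simp [HF]
  have hc : HF.card = h := by
    rw [hh, ← hHc]
    exact (Set.ncard_eq_toFinset_card _ _).symm
  have hh1 : 1 ≤ h := by rw [hh]; exact Nat.pos_of_ne_zero (by positivity)
  have h3 : ∀ a, a + a + a ∈ H → a ∈ H := by
    intro a ha
    obtain ⟨c, hcc⟩ : ∃ c, (3 ^ s + 1) ^ 2 = 3 * c + 1 := by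
      obtain ⟨b, hb⟩ : 3 ∣ 3 ^ s := dvd_pow_self 3 (by omega)
      exact ⟨3 * b ^ 2 + 2 * b, by rw [hb]; ring⟩
    have h0 : Nat.card (LRC.Wg g).Point • a = 0 := card_nsmul_eq_zero'
    rw [hcard', hcc, add_smul, one_smul, mul_comm, mul_smul] at h0
    have h4 : (3 : ℕ) • a = a + a + a := by rw [succ_nsmul, two_nsmul]
    rw [h4] at h0
    rw [eq_neg_of_add_eq_zero_right h0]
    exact H.neg_mem (H.nsmul_mem ha c)
  obtain ⟨Pj, hPj, hinj⟩ := LRC.exists_reps hg H hH HF hHF h m hc hh1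
    (by rw [← Nat.card_eq_fintype_card, hcard']; exact har)
  exact LRC.assembly hg H hH HF hHF h3 h hc hh1 ht htm Pj hPj hinj
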